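/- arXiv:2407.01341 — 2 statements merged into one kernel-verified Lean document; each statement's English description precedes it below -/
import Mathlib

section
/- There exists a positive constant C depending only on N + m such that, for every open bounded convex domain Ω ⊂ ℝ^N with diameter D and every positive (1/m)-concave weight φ ∈ L¹(Ω), any first eigenfunction ū associated with the weighted Neumann eigenvalue μ₁(Ω, φ) satisfies ‖ū‖_{L^∞(Ω)} ≤ C μ₁(Ω,φ)^{(N+m)/2} · D^{N+m} / (∫_Ω φ)^{1/2} · ‖ū‖_{L²(Ω,φ)}. -/
open MeasureTheory Real Set Filter Bornology
open scoped ENNReal RealInnerProductSpace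

noncomputable section

/-- Dirichlet Rayleigh quotient of `u` on `Ω ⊆ ℝ^N`. -/
def dRayleigh {N : ℕ} (Ω : Set (EuclideanSpace ℝ (Fin N)))
    (u : EuclideanSpace ℝ (Fin N) → ℝ) : ℝ≥0∞ :=
  (∫⁻ x in Ω, ENNReal.ofReal (‖fderiv ℝ u x‖ ^ 2)) /
    ∫⁻ x in Ω, ENNReal.ofReal ((u x) ^ 2)

/-- The `k`-th Dirichlet Laplacian eigenvalue of `Ω`, via the Courant–Fischer min-max
over `k`-dimensional subspaces of (a core of) `H¹₀(Ω)`. -/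
def dirEV {N : ℕ} (Ω : Set (EuclideanSpace ℝ (Fin N))) (k : ℕ) : ℝ≥0∞ :=
  ⨅ (S : Submodule ℝ (EuclideanSpace ℝ (Fin N) → ℝ))
    (_ : Module.finrank ℝ S = k ∧ ∀ u ∈ S, ContDiff ℝ 1 u ∧ tsupport u ⊆ Ω),
    ⨆ (u : EuclideanSpace ℝ (Fin N) → ℝ) (_ : u ∈ S ∧ u ≠ 0), dRayleigh Ω u

/-- Weighted Rayleigh quotient of `u` on `Ω` with weight `p`. -/
def wRayleigh {N : ℕ} (Ω : Set (EuclideanSpace ℝ (Fin N)))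
    (p u : EuclideanSpace ℝ (Fin N) → ℝ) : ℝ≥0∞ :=
  (∫⁻ x in Ω, ENNReal.ofReal (‖fderiv ℝ u x‖ ^ 2 * p x)) /
    ∫⁻ x in Ω, ENNReal.ofReal ((u x) ^ 2 * p x)

/-- Admissibility of `u` for the weighted Neumann eigenvalue `μ₁(Ω, p)`:
`u ∈ H¹_loc(Ω) ∩ L²(Ω, p dx)`, `u ≠ 0`, with zero `p`-mean. -/
def wAdm {N : ℕ} (Ω : Set (EuclideanSpace ℝ (Fin N)))
    (p u : EuclideanSpace ℝ (Fin N) → ℝ) : Prop :=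
  ContDiffOn ℝ 1 u Ω ∧
    (∫⁻ x in Ω, ENNReal.ofReal ((u x) ^ 2 * p x)) ≠ 0 ∧
    (∫⁻ x in Ω, ENNReal.ofReal ((u x) ^ 2 * p x)) ≠ ∞ ∧
    (∫ x in Ω, u x * p x) = 0

/-- `μ₁(Ω, p)`, the first nontrivial weighted Neumann eigenvalue of `Ω`.
For `p ≡ 1` this is the first nontrivial Neumann Laplacian eigenvalue. -/
def wEV {N : ℕ} (Ω : Set (EuclideanSpace ℝ (Fin N)))
    (p : EuclideanSpace ℝ (Fin N) → ℝ) : ℝ≥0∞ :=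
  ⨅ (u : EuclideanSpace ℝ (Fin N) → ℝ) (_ : wAdm Ω p u), wRayleigh Ω p u

/-- The width of `Ω`: the minimal distance between two parallel supporting hyperplanes,
i.e. the infimum over unit directions of the breadth of `Ω` in that direction. -/
def width {N : ℕ} (Ω : Set (EuclideanSpace ℝ (Fin N))) : ℝ :=
  ⨅ v : Metric.sphere (0 : EuclideanSpace ℝ (Fin N)) 1,
    (sSup ((fun x => ⟪x, (v : EuclideanSpace ℝ (Fin N))⟫) '' Ω) -
      sInf ((fun x => ⟪x, (v : EuclideanSpace ℝ (Fin N))⟫) '' Ω))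

/-- `u` is a first Dirichlet eigenfunction of `Ω` (positive, `L²`-normalized):
it lies in (an avatar of) `H¹₀(Ω)` and achieves `λ₁(Ω)` as a Rayleigh quotient. -/
def IsFirstDirichletEF {N : ℕ} (Ω : Set (EuclideanSpace ℝ (Fin N)))
    (u : EuclideanSpace ℝ (Fin N) → ℝ) : Prop :=
  Continuous u ∧ (∀ x ∉ Ω, u x = 0) ∧ ContDiffOn ℝ 1 u Ω ∧
    (∫⁻ x in Ω, ENNReal.ofReal (‖fderiv ℝ u x‖ ^ 2)) ≠ ∞ ∧
    (∀ x ∈ Ω, 0 < u x) ∧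
    (∫⁻ x in Ω, ENNReal.ofReal ((u x) ^ 2)) = 1 ∧
    dRayleigh Ω u = dirEV Ω 1

/-- `u2` is a second Dirichlet eigenfunction of `Ω` (`L²`-normalized, orthogonal to the
first eigenfunction `u1`), achieving `λ₂(Ω)` as a Rayleigh quotient. -/
def IsSecondDirichletEF {N : ℕ} (Ω : Set (EuclideanSpace ℝ (Fin N)))
    (u1 u2 : EuclideanSpace ℝ (Fin N) → ℝ) : Prop :=
  Continuous u2 ∧ (∀ x ∉ Ω, u2 x = 0) ∧ ContDiffOn ℝ 1 u2 Ω ∧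
    (∫⁻ x in Ω, ENNReal.ofReal (‖fderiv ℝ u2 x‖ ^ 2)) ≠ ∞ ∧
    (∫ x in Ω, u1 x * u2 x) = 0 ∧
    (∫⁻ x in Ω, ENNReal.ofReal ((u2 x) ^ 2)) = 1 ∧
    dRayleigh Ω u2 = dirEV Ω 2

/-! ### Auxiliary lemmas -/

theorem aux_cs {α : Type*} [MeasurableSpace α] (ν : Measure α) (g : α → ℝ≥0∞)
    (hg : AEMeasurable g ν) :
    (∫⁻ x, g x ∂ν) ^ 2 ≤ ν univ * ∫⁻ x, g x ^ 2 ∂ν := by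
  have h := ENNReal.lintegral_mul_le_Lp_mul_Lq ν Real.HolderConjugate.two_two
    (aemeasurable_const (b := (1 : ℝ≥0∞))) hg
  have h2 : ∫⁻ x, g x ∂ν ≤ (ν univ) ^ (1 / 2 : ℝ) * (∫⁻ x, g x ^ 2 ∂ν) ^ (1 / 2 : ℝ) := by
    simpa using h
  calc (∫⁻ x, g x ∂ν) ^ 2
      ≤ ((ν univ) ^ (1 / 2 : ℝ) * (∫⁻ x, g x ^ 2 ∂ν) ^ (1 / 2 : ℝ)) ^ 2 := by gcongr
    _ = _ := by
      rw [mul_pow, ← ENNReal.rpow_natCast, ← ENNReal.rpow_natCast, ← ENNReal.rpow_mul,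
        ← ENNReal.rpow_mul]
      norm_num

theorem aux_add_sq (a b : ℝ≥0∞) : (a + b) ^ 2 ≤ 2 * a ^ 2 + 2 * b ^ 2 := by
  have h := ENNReal.rpow_add_le_mul_rpow_add_rpow a b (p := 2) (by norm_num)
  have h2 : (a + b) ^ 2 ≤ 2 ^ (2 - 1 : ℝ) * (a ^ 2 + b ^ 2) := by exact_mod_cast h
  rw [show (2 - 1 : ℝ) = 1 by norm_num, ENNReal.rpow_one] at h2
  rwa [mul_add] at h2

theorem aux_scale {N : ℕ} (g : EuclideanSpace ℝ (Fin N) → ℝ≥0∞) (y : EuclideanSpace ℝ (Fin N))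
    (t : ℝ) (ht : 0 < t) :
    ∫⁻ x, g (y + t • (x - y)) = ENNReal.ofReal ((t ^ N)⁻¹) * ∫⁻ x, g x := by
  have h1 := lintegral_sub_right_eq_self (μ := (volume : Measure (EuclideanSpace ℝ (Fin N))))
    (fun z => g (y + t • z)) y
  rw [h1]
  have h2 := lintegral_map_equiv (μ := (volume : Measure (EuclideanSpace ℝ (Fin N))))
    (fun z => g (y + z)) (MeasurableEquiv.smul₀ t ht.ne')
  have h3 : ⇑(MeasurableEquiv.smul₀ t ht.ne' : EuclideanSpace ℝ (Fin N) ≃ᵐ _) = fun x => t • x :=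
    rfl
  rw [h3, Measure.map_addHaar_smul _ ht.ne', lintegral_smul_measure] at h2
  rw [← h2, lintegral_add_left_eq_self (μ := (volume : Measure (EuclideanSpace ℝ (Fin N)))) g y]
  rw [abs_of_pos (by positivity), finrank_euclideanSpace_fin, smul_eq_mul]

/-- weighted scaling property -/
theorem aux_HC {N m : ℕ} (hm : 0 < m) (Ω : Set (EuclideanSpace ℝ (Fin N))) (hΩ : IsOpen Ω)
    (hc : Convex ℝ Ω) (φ : EuclideanSpace ℝ (Fin N) → ℝ) (hφ : ∀ x ∈ Ω, 0 < φ x)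
    (hi : IntegrableOn φ Ω) (hconc : ConcaveOn ℝ Ω (fun x => φ x ^ ((1 : ℝ) / m)))
    (y : EuclideanSpace ℝ (Fin N)) (hy : y ∈ Ω) (t : ℝ) (ht : 0 < t) (ht1 : t ≤ 1)
    (g : EuclideanSpace ℝ (Fin N) → ℝ≥0∞) :
    ∫⁻ x, g (y + t • (x - y)) ∂((volume.restrict Ω).withDensity (fun x => ENNReal.ofReal (φ x)))
      ≤ ENNReal.ofReal ((t ^ (N + m))⁻¹) *
        ∫⁻ x, g x ∂((volume.restrict Ω).withDensity (fun x => ENNReal.ofReal (φ x))) := by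
  have hw : AEMeasurable (fun x => ENNReal.ofReal (φ x)) (volume.restrict Ω) :=
    hi.aestronglyMeasurable.aemeasurable.ennreal_ofReal
  have hfin : ∀ᵐ x ∂(volume.restrict Ω), ENNReal.ofReal (φ x) < ∞ := by simp
  rw [lintegral_withDensity_eq_lintegral_mul_non_measurable₀ _ hw hfin,
    lintegral_withDensity_eq_lintegral_mul_non_measurable₀ _ hw hfin,
    ← lintegral_indicator hΩ.measurableSet, ← lintegral_indicator hΩ.measurableSet]
  have hpt : ∀ x, Ω.indicator ((fun x => ENNReal.ofReal (φ x)) * fun x => g (y + t • (x - y))) x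
      ≤ ENNReal.ofReal ((t ^ m)⁻¹) *
        Ω.indicator ((fun x => ENNReal.ofReal (φ x)) * g) (y + t • (x - y)) := by
    intro x
    by_cases hx : x ∈ Ω
    · have hz : y + t • (x - y) ∈ Ω := hc.add_smul_sub_mem hy hx ⟨ht.le, ht1⟩
      rw [indicator_of_mem hx, indicator_of_mem hz]
      simp only [Pi.mul_apply]
      rw [← mul_assoc, ← ENNReal.ofReal_mul (by positivity)]
      gcongr
      have h1 := hconc.2 hy hx (sub_nonneg.2 ht1) ht.le (by ring)
      have h2 : (1 - t) • y + t • x = y + t • (x - y) := by module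
      rw [h2] at h1
      simp only [smul_eq_mul] at h1
      have h3 : t * φ x ^ ((1 : ℝ) / m) ≤ φ (y + t • (x - y)) ^ ((1 : ℝ) / m) := by
        have : 0 ≤ (1 - t) * φ y ^ ((1 : ℝ) / m) :=
          mul_nonneg (sub_nonneg.2 ht1) (rpow_nonneg (hφ y hy).le _)
        linarith
      have h4 := pow_le_pow_left₀ (mul_nonneg ht.le (rpow_nonneg (hφ x hx).le _)) h3 m
      have hm' : (m : ℝ) ≠ 0 := by positivity
      rw [mul_pow, ← rpow_natCast (φ x ^ _), ← rpow_natCast (φ _ ^ _), ← rpow_mul (hφ x hx).le,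
        ← rpow_mul (hφ _ hz).le, one_div_mul_cancel hm', rpow_one, rpow_one] at h4
      rw [inv_mul_eq_div, le_div_iff₀ (by positivity)]
      linarith
    · rw [indicator_of_notMem hx]; exact zero_le
  calc _ ≤ ∫⁻ x, ENNReal.ofReal ((t ^ m)⁻¹) *
        Ω.indicator ((fun x => ENNReal.ofReal (φ x)) * g) (y + t • (x - y)) := lintegral_mono hpt
    _ = _ := by
      rw [lintegral_const_mul' _ _ ENNReal.ofReal_ne_top, aux_scale _ _ _ ht, ← mul_assoc,
        ← ENNReal.ofReal_mul (by positivity), pow_add, mul_inv, mul_comm (t ^ N)⁻¹]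

theorem aux_line {N : ℕ} (Ω : Set (EuclideanSpace ℝ (Fin N))) (hΩ : IsOpen Ω)
    (hc : Convex ℝ Ω) (D : ℝ) (hD : ∀ x ∈ Ω, ∀ y ∈ Ω, dist x y ≤ D)
    (f : EuclideanSpace ℝ (Fin N) → ℝ) (hf : ContDiffOn ℝ 1 f Ω)
    (x y : EuclideanSpace ℝ (Fin N)) (hx : x ∈ Ω) (hy : y ∈ Ω) (ε : ℝ) (h0 : 0 < ε) (h1 : ε ≤ 1) :
    ‖f x - f (x + ε • (y - x))‖ₑ ^ 2 ≤ ENNReal.ofReal (ε * D ^ 2) *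
      ∫⁻ t in Ioc 0 ε, ‖fderiv ℝ f (x + t • (y - x))‖ₑ ^ 2 := by
  have hmem : ∀ t ∈ uIcc 0 ε, x + t • (y - x) ∈ Ω := by
    intro t ht
    rw [uIcc_of_le h0.le] at ht
    exact hc.add_smul_sub_mem hx hy ⟨ht.1, ht.2.trans h1⟩
  have hD0 : 0 ≤ D := dist_nonneg.trans (hD x hx y hy)
  have hd : ∀ t ∈ uIcc 0 ε, HasDerivAt (fun t : ℝ => f (x + t • (y - x)))
      (fderiv ℝ f (x + t • (y - x)) (y - x)) t := by
    intro t ht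
    have h2 : HasDerivAt (fun t : ℝ => x + t • (y - x)) (y - x) t := by
      simpa using ((hasDerivAt_id t).smul_const (y - x)).const_add x
    have h3 : DifferentiableAt ℝ f (x + t • (y - x)) :=
      (hf.differentiableOn one_ne_zero).differentiableAt (hΩ.mem_nhds (hmem t ht))
    exact h3.hasFDerivAt.comp_hasDerivAt t h2
  have hcont : ContinuousOn (fun t : ℝ => fderiv ℝ f (x + t • (y - x)) (y - x)) (uIcc 0 ε) := by
    have h4 : ContinuousOn (fun t : ℝ => fderiv ℝ f (x + t • (y - x))) (uIcc 0 ε) :=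
      (hf.continuousOn_fderiv_of_isOpen hΩ le_rfl).comp (by fun_prop) hmem
    exact h4.clm_apply continuousOn_const
  have hint := intervalIntegral.integral_eq_sub_of_hasDerivAt hd hcont.intervalIntegrable
  rw [intervalIntegral.integral_of_le h0.le] at hint
  have hle : ‖f x - f (x + ε • (y - x))‖ₑ ≤
      ∫⁻ t in Ioc 0 ε, ‖fderiv ℝ f (x + t • (y - x)) (y - x)‖ₑ := by
    rw [enorm_sub_rev]
    have := enorm_integral_le_lintegral_enorm (μ := volume.restrict (Ioc 0 ε))
      (fun t : ℝ => fderiv ℝ f (x + t • (y - x)) (y - x))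
    rw [hint] at this
    simpa using this
  have hmeas : Measurable (fun t : ℝ => fderiv ℝ f (x + t • (y - x))) :=
    (measurable_fderiv ℝ f).comp (by fun_prop)
  have hle2 : ∫⁻ t in Ioc 0 ε, ‖fderiv ℝ f (x + t • (y - x)) (y - x)‖ₑ ≤
      ∫⁻ t in Ioc 0 ε, ENNReal.ofReal D * ‖fderiv ℝ f (x + t • (y - x))‖ₑ := by
    refine lintegral_mono fun t => ?_
    refine ((fderiv ℝ f (x + t • (y - x))).le_opENorm (y - x)).trans ?_
    rw [mul_comm]
    gcongr
    rw [← ofReal_norm, ← dist_eq_norm]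
    exact ENNReal.ofReal_le_ofReal (hD y hy x hx)
  calc _ ≤ (∫⁻ t in Ioc 0 ε, ENNReal.ofReal D * ‖fderiv ℝ f (x + t • (y - x))‖ₑ) ^ 2 := by
        gcongr; exact hle.trans hle2
    _ = ENNReal.ofReal D ^ 2 * (∫⁻ t in Ioc 0 ε, ‖fderiv ℝ f (x + t • (y - x))‖ₑ) ^ 2 := by
        rw [lintegral_const_mul' _ _ ENNReal.ofReal_ne_top, mul_pow]
    _ ≤ ENNReal.ofReal D ^ 2 * ((volume.restrict (Ioc 0 ε)) univ *
          ∫⁻ t in Ioc 0 ε, ‖fderiv ℝ f (x + t • (y - x))‖ₑ ^ 2) := by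
        gcongr
        exact aux_cs _ _ hmeas.enorm.aemeasurable
    _ = _ := by
        rw [Measure.restrict_apply_univ, Real.volume_Ioc, ← mul_assoc,
          ← ENNReal.ofReal_pow hD0, ← ENNReal.ofReal_mul (by positivity)]
        congr 2
        ring

theorem aux_double {N n : ℕ} (Ω : Set (EuclideanSpace ℝ (Fin N)))
    (ν : Measure (EuclideanSpace ℝ (Fin N))) [IsFiniteMeasure ν] (hν : ∀ᵐ x ∂ν, x ∈ Ω)
    (HC : ∀ y ∈ Ω, ∀ t : ℝ, 0 < t → t ≤ 1 → ∀ g : EuclideanSpace ℝ (Fin N) → ℝ≥0∞,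
      ∫⁻ x, g (y + t • (x - y)) ∂ν ≤ ENNReal.ofReal ((t ^ n)⁻¹) * ∫⁻ x, g x ∂ν)
    (h : EuclideanSpace ℝ (Fin N) → ℝ≥0∞) (hh : Measurable h) (ε : ℝ) (h0 : 0 < ε)
    (h1 : ε ≤ 1 / 2) :
    ∫⁻ x, ∫⁻ y, (∫⁻ t in Ioc 0 ε, h (x + t • (y - x))) ∂ν ∂ν ≤
      ENNReal.ofReal (2 ^ n * ε) * ν univ * ∫⁻ x, h x ∂ν := by
  have e1 : ∀ x, ∫⁻ y, (∫⁻ t in Ioc 0 ε, h (x + t • (y - x))) ∂ν =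
      ∫⁻ t in Ioc 0 ε, ∫⁻ y, h (x + t • (y - x)) ∂ν := by
    intro x
    refine lintegral_lintegral_swap (Measurable.aemeasurable ?_)
    exact hh.comp (by fun_prop)
  have e2 : ∫⁻ x, (∫⁻ t in Ioc 0 ε, ∫⁻ y, h (x + t • (y - x)) ∂ν) ∂ν =
      ∫⁻ t in Ioc 0 ε, ∫⁻ x, ∫⁻ y, h (x + t • (y - x)) ∂ν ∂ν := by
    refine lintegral_lintegral_swap (Measurable.aemeasurable ?_)
    refine Measurable.lintegral_prod_right
      (f := fun (p : (EuclideanSpace ℝ (Fin N)) × ℝ) (y : EuclideanSpace ℝ (Fin N)) =>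
        h (p.1 + p.2 • (y - p.1))) ?_
    exact hh.comp (by fun_prop)
  have e3 : ∀ t : ℝ, ∫⁻ x, ∫⁻ y, h (x + t • (y - x)) ∂ν ∂ν =
      ∫⁻ y, ∫⁻ x, h (x + t • (y - x)) ∂ν ∂ν := by
    intro t
    refine lintegral_lintegral_swap (Measurable.aemeasurable ?_)
    exact hh.comp (by fun_prop)
  simp_rw [e1]
  rw [e2]
  simp_rw [e3]
  have e4 : ∀ t ∈ Ioc 0 ε, ∫⁻ y, ∫⁻ x, h (x + t • (y - x)) ∂ν ∂ν ≤
      ENNReal.ofReal (2 ^ n) * ν univ * ∫⁻ x, h x ∂ν := by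
    intro t ht
    have ht2 : 1 / 2 ≤ 1 - t := by linarith [ht.2]
    calc ∫⁻ y, ∫⁻ x, h (x + t • (y - x)) ∂ν ∂ν
        ≤ ∫⁻ y, ENNReal.ofReal (2 ^ n) * ∫⁻ x, h x ∂ν ∂ν := by
          refine lintegral_mono_ae ?_
          filter_upwards [hν] with y hy
          have h5 := HC y hy (1 - t) (by linarith) (by linarith [ht.1]) h
          have h6 : ∀ x, y + (1 - t) • (x - y) = x + t • (y - x) := fun x => by module
          simp_rw [h6] at h5
          refine h5.trans ?_
          gcongr
          rw [← inv_pow]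
          refine pow_le_pow_left₀ (inv_nonneg.2 (by linarith)) ?_ n
          rw [inv_le_comm₀ (by linarith) (by norm_num)]
          linarith
      _ = _ := by rw [lintegral_const]; ring
  calc ∫⁻ t in Ioc 0 ε, ∫⁻ y, ∫⁻ x, h (x + t • (y - x)) ∂ν ∂ν
      ≤ ∫⁻ t in Ioc 0 ε, ENNReal.ofReal (2 ^ n) * ν univ * ∫⁻ x, h x ∂ν :=
        setLIntegral_mono' measurableSet_Ioc e4
    _ = _ := by
      rw [lintegral_const, Measure.restrict_apply_univ, Real.volume_Ioc,
        ENNReal.ofReal_mul (by positivity), sub_zero]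
      ring

theorem aux_aem {N : ℕ} (Ω : Set (EuclideanSpace ℝ (Fin N))) (hΩ : IsOpen Ω)
    (ν : Measure (EuclideanSpace ℝ (Fin N))) (hν : ∀ᵐ x ∂ν, x ∈ Ω)
    (f : EuclideanSpace ℝ (Fin N) → ℝ) (hf : ContinuousOn f Ω) : AEMeasurable f ν := by
  have h := hf.aemeasurable (μ := ν) hΩ.measurableSet
  rwa [Measure.restrict_eq_self_of_ae_mem hν] at h

theorem aux_nash {N n : ℕ} (Ω : Set (EuclideanSpace ℝ (Fin N))) (hΩ : IsOpen Ω)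
    (hc : Convex ℝ Ω) (D : ℝ) (hD : ∀ x ∈ Ω, ∀ y ∈ Ω, dist x y ≤ D)
    (ν : Measure (EuclideanSpace ℝ (Fin N))) [IsFiniteMeasure ν] (hν : ∀ᵐ x ∂ν, x ∈ Ω)
    (hν0 : ν univ ≠ 0)
    (HC : ∀ y ∈ Ω, ∀ t : ℝ, 0 < t → t ≤ 1 → ∀ g : EuclideanSpace ℝ (Fin N) → ℝ≥0∞,
      ∫⁻ x, g (y + t • (x - y)) ∂ν ≤ ENNReal.ofReal ((t ^ n)⁻¹) * ∫⁻ x, g x ∂ν)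
    (f : EuclideanSpace ℝ (Fin N) → ℝ) (hf : ContDiffOn ℝ 1 f Ω) (ε : ℝ) (h0 : 0 < ε)
    (h1 : ε ≤ 1 / 2) :
    ν univ * ∫⁻ x, ‖f x‖ₑ ^ 2 ∂ν ≤
      ENNReal.ofReal (2 * 2 ^ n * ε ^ 2 * D ^ 2) * ν univ * ∫⁻ x, ‖fderiv ℝ f x‖ₑ ^ 2 ∂ν
      + 2 * (ENNReal.ofReal ((ε ^ n)⁻¹) * ∫⁻ x, ‖f x‖ₑ ∂ν) ^ 2 := by
  have hVt : ν univ ≠ ∞ := measure_ne_top _ _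
  set V := ν univ with hV
  set L := ENNReal.ofReal ((ε ^ n)⁻¹) * ∫⁻ x, ‖f x‖ₑ ∂ν with hL
  have hpt : ∀ x ∈ Ω, V ^ 2 * ‖f x‖ₑ ^ 2 ≤ 2 * V * ENNReal.ofReal (ε * D ^ 2) *
      (∫⁻ y, (∫⁻ t in Ioc 0 ε, ‖fderiv ℝ f (x + t • (y - x))‖ₑ ^ 2) ∂ν) + 2 * L ^ 2 := by
    intro x hx
    have hcf : ContinuousOn (fun y => f x - f (x + ε • (y - x))) Ω := by
      refine continuousOn_const.sub (hf.continuousOn.comp (by fun_prop) ?_)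
      intro y hy
      exact hc.add_smul_sub_mem hx hy ⟨h0.le, by linarith⟩
    have hm := (aux_aem Ω hΩ ν hν _ hcf).enorm
    have a1 : V * ‖f x‖ₑ ≤ ∫⁻ y, ‖f x - f (x + ε • (y - x))‖ₑ ∂ν + L := by
      calc V * ‖f x‖ₑ = ∫⁻ y, ‖f x‖ₑ ∂ν := by rw [lintegral_const, mul_comm]
        _ ≤ ∫⁻ y, (‖f x - f (x + ε • (y - x))‖ₑ + ‖f (x + ε • (y - x))‖ₑ) ∂ν := by
          refine lintegral_mono fun y => ?_
          have := enorm_add_le (f x - f (x + ε • (y - x))) (f (x + ε • (y - x)))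
          simpa using this
        _ = ∫⁻ y, ‖f x - f (x + ε • (y - x))‖ₑ ∂ν + ∫⁻ y, ‖f (x + ε • (y - x))‖ₑ ∂ν :=
          lintegral_add_left' hm _
        _ ≤ _ := by
          gcongr
          exact HC x hx ε h0 (by linarith) (fun z => ‖f z‖ₑ)
    calc V ^ 2 * ‖f x‖ₑ ^ 2 = (V * ‖f x‖ₑ) ^ 2 := by ring
      _ ≤ (∫⁻ y, ‖f x - f (x + ε • (y - x))‖ₑ ∂ν + L) ^ 2 := by gcongr
      _ ≤ 2 * (∫⁻ y, ‖f x - f (x + ε • (y - x))‖ₑ ∂ν) ^ 2 + 2 * L ^ 2 := aux_add_sq _ _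
      _ ≤ 2 * (V * ∫⁻ y, ‖f x - f (x + ε • (y - x))‖ₑ ^ 2 ∂ν) + 2 * L ^ 2 := by
        gcongr
        exact aux_cs ν _ hm
      _ ≤ 2 * (V * ∫⁻ y, ENNReal.ofReal (ε * D ^ 2) *
          (∫⁻ t in Ioc 0 ε, ‖fderiv ℝ f (x + t • (y - x))‖ₑ ^ 2) ∂ν) + 2 * L ^ 2 := by
        gcongr 2 * (V * ?_) + _
        refine lintegral_mono_ae ?_
        filter_upwards [hν] with y hy
        exact aux_line Ω hΩ hc D hD f hf x y hx hy ε h0 (by linarith)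
      _ = _ := by
        rw [lintegral_const_mul' _ _ ENNReal.ofReal_ne_top]; ring
  have hdd := aux_double Ω ν hν HC (fun z => ‖fderiv ℝ f z‖ₑ ^ 2)
    ((measurable_fderiv ℝ f).enorm.pow_const 2) ε h0 h1
  have hI : V ^ 2 * ∫⁻ x, ‖f x‖ₑ ^ 2 ∂ν ≤ 2 * V * ENNReal.ofReal (ε * D ^ 2) *
      (ENNReal.ofReal (2 ^ n * ε) * V * ∫⁻ x, ‖fderiv ℝ f x‖ₑ ^ 2 ∂ν) + 2 * L ^ 2 * V := by
    calc V ^ 2 * ∫⁻ x, ‖f x‖ₑ ^ 2 ∂ν = ∫⁻ x, V ^ 2 * ‖f x‖ₑ ^ 2 ∂ν := by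
          rw [lintegral_const_mul' _ _ (ENNReal.pow_ne_top hVt)]
      _ ≤ ∫⁻ x, (2 * V * ENNReal.ofReal (ε * D ^ 2) *
      (∫⁻ y, (∫⁻ t in Ioc 0 ε, ‖fderiv ℝ f (x + t • (y - x))‖ₑ ^ 2) ∂ν) + 2 * L ^ 2) ∂ν := by
          refine lintegral_mono_ae ?_
          filter_upwards [hν] with x hx using hpt x hx
      _ = 2 * V * ENNReal.ofReal (ε * D ^ 2) * (∫⁻ x, ∫⁻ y, (∫⁻ t in Ioc 0 ε,
          ‖fderiv ℝ f (x + t • (y - x))‖ₑ ^ 2) ∂ν ∂ν) + 2 * L ^ 2 * V := by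
          rw [lintegral_add_right _ measurable_const, lintegral_const, lintegral_const_mul']
          exact ENNReal.mul_ne_top (ENNReal.mul_ne_top (by simp) hVt) ENNReal.ofReal_ne_top
      _ ≤ _ := by gcongr
  have hI2 : V * (V * ∫⁻ x, ‖f x‖ₑ ^ 2 ∂ν) ≤
      V * (ENNReal.ofReal (2 * 2 ^ n * ε ^ 2 * D ^ 2) * V * ∫⁻ x, ‖fderiv ℝ f x‖ₑ ^ 2 ∂ν
      + 2 * L ^ 2) := by
    have e : ENNReal.ofReal (2 * 2 ^ n * ε ^ 2 * D ^ 2) =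
        2 * ENNReal.ofReal (ε * D ^ 2) * ENNReal.ofReal (2 ^ n * ε) := by
      have : (2 : ℝ≥0∞) = ENNReal.ofReal 2 := by simp
      rw [this, ← ENNReal.ofReal_mul (by norm_num), ← ENNReal.ofReal_mul (by positivity)]
      congr 1
      ring
    rw [e]
    calc _ = V ^ 2 * ∫⁻ x, ‖f x‖ₑ ^ 2 ∂ν := by ring
      _ ≤ _ := hI
      _ = _ := by ring
  exact (ENNReal.mul_le_mul_iff_right hν0 hVt).1 hI2

theorem aux_poincare {N n : ℕ} (Ω : Set (EuclideanSpace ℝ (Fin N))) (hΩ : IsOpen Ω)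
    (hc : Convex ℝ Ω) (D : ℝ) (hD : ∀ x ∈ Ω, ∀ y ∈ Ω, dist x y ≤ D)
    (ν : Measure (EuclideanSpace ℝ (Fin N))) [IsFiniteMeasure ν] (hν : ∀ᵐ x ∂ν, x ∈ Ω)
    (hν0 : ν univ ≠ 0)
    (HC : ∀ y ∈ Ω, ∀ t : ℝ, 0 < t → t ≤ 1 → ∀ g : EuclideanSpace ℝ (Fin N) → ℝ≥0∞,
      ∫⁻ x, g (y + t • (x - y)) ∂ν ≤ ENNReal.ofReal ((t ^ n)⁻¹) * ∫⁻ x, g x ∂ν)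
    (u : EuclideanSpace ℝ (Fin N) → ℝ) (hu : ContDiffOn ℝ 1 u Ω) (hui : Integrable u ν)
    (hu0 : ∫ x, u x ∂ν = 0) :
    ∫⁻ x, ‖u x‖ₑ ^ 2 ∂ν ≤ ENNReal.ofReal (2 ^ n * D ^ 2) * ∫⁻ x, ‖fderiv ℝ u x‖ₑ ^ 2 ∂ν := by
  have hVt : ν univ ≠ ∞ := measure_ne_top _ _
  set V := ν univ with hV
  set H : EuclideanSpace ℝ (Fin N) → EuclideanSpace ℝ (Fin N) → ℝ≥0∞ := fun x y =>
    ∫⁻ t in Ioc (0 : ℝ) (1 / 2), ‖fderiv ℝ u (x + t • (y - x))‖ₑ ^ 2 with hH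
  have hHm : Measurable (Function.uncurry H) := by
    refine Measurable.lintegral_prod_right
      (f := fun (p : (EuclideanSpace ℝ (Fin N)) × (EuclideanSpace ℝ (Fin N))) (t : ℝ) =>
        ‖fderiv ℝ u (p.1 + t • (p.2 - p.1))‖ₑ ^ 2) ?_
    exact ((measurable_fderiv ℝ u).enorm.pow_const 2).comp
      (f := fun q : (EuclideanSpace ℝ (Fin N) × EuclideanSpace ℝ (Fin N)) × ℝ =>
        q.1.1 + q.2 • (q.1.2 - q.1.1)) (by fun_prop)
  have hpair : ∀ x ∈ Ω, ∀ y ∈ Ω, ‖u x - u y‖ₑ ^ 2 ≤ ENNReal.ofReal (D ^ 2) * (H x y + H y x) := by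
    intro x hx y hy
    have b1 := aux_line Ω hΩ hc D hD u hu x y hx hy (1 / 2) (by norm_num) (by norm_num)
    have b2 := aux_line Ω hΩ hc D hD u hu y x hy hx (1 / 2) (by norm_num) (by norm_num)
    have e : y + (1 / 2 : ℝ) • (x - y) = x + (1 / 2 : ℝ) • (y - x) := by module
    rw [e] at b2
    set z := x + (1 / 2 : ℝ) • (y - x)
    have e2 : (2 : ℝ≥0∞) * ENNReal.ofReal (1 / 2 * D ^ 2) = ENNReal.ofReal (D ^ 2) := by
      have : (2 : ℝ≥0∞) = ENNReal.ofReal 2 := by simp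
      rw [this, ← ENNReal.ofReal_mul (by norm_num)]
      congr 1
      ring
    calc ‖u x - u y‖ₑ ^ 2 ≤ (‖u x - u z‖ₑ + ‖u y - u z‖ₑ) ^ 2 := by
          gcongr
          have := enorm_sub_le (a := u x - u z) (b := u y - u z)
          simpa using this
      _ ≤ 2 * ‖u x - u z‖ₑ ^ 2 + 2 * ‖u y - u z‖ₑ ^ 2 := aux_add_sq _ _
      _ ≤ 2 * (ENNReal.ofReal (1 / 2 * D ^ 2) * H x y) +
          2 * (ENNReal.ofReal (1 / 2 * D ^ 2) * H y x) := by gcongr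
      _ = _ := by rw [← e2]; ring
  have hpt : ∀ x ∈ Ω, V ^ 2 * ‖u x‖ₑ ^ 2 ≤
      V * ENNReal.ofReal (D ^ 2) * ∫⁻ y, (H x y + H y x) ∂ν := by
    intro x hx
    have c1 : ∫ y, (u x - u y) ∂ν = V.toReal * u x := by
      rw [integral_sub (integrable_const _) hui, hu0, integral_const, sub_zero, smul_eq_mul]
      rfl
    have c2 : V * ‖u x‖ₑ ≤ ∫⁻ y, ‖u x - u y‖ₑ ∂ν := by
      have := enorm_integral_le_lintegral_enorm (μ := ν) (fun y => u x - u y)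
      rw [c1, enorm_mul, Real.enorm_of_nonneg ENNReal.toReal_nonneg, ENNReal.ofReal_toReal hVt]
        at this
      exact this
    have hm : AEMeasurable (fun y => ‖u x - u y‖ₑ) ν :=
      (aemeasurable_const.sub hui.aestronglyMeasurable.aemeasurable).enorm
    calc V ^ 2 * ‖u x‖ₑ ^ 2 = (V * ‖u x‖ₑ) ^ 2 := by ring
      _ ≤ (∫⁻ y, ‖u x - u y‖ₑ ∂ν) ^ 2 := by gcongr
      _ ≤ V * ∫⁻ y, ‖u x - u y‖ₑ ^ 2 ∂ν := aux_cs ν _ hm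
      _ ≤ V * ∫⁻ y, ENNReal.ofReal (D ^ 2) * (H x y + H y x) ∂ν := by
        gcongr V * ?_
        refine lintegral_mono_ae ?_
        filter_upwards [hν] with y hy using hpair x hx y hy
      _ = _ := by rw [lintegral_const_mul' _ _ ENNReal.ofReal_ne_top]; ring
  have hdd := aux_double Ω ν hν HC (fun z => ‖fderiv ℝ u z‖ₑ ^ 2)
    ((measurable_fderiv ℝ u).enorm.pow_const 2) (1 / 2) (by norm_num) le_rfl
  have hsum : ∫⁻ x, ∫⁻ y, (H x y + H y x) ∂ν ∂ν ≤
      2 * (ENNReal.ofReal (2 ^ n * (1 / 2)) * V * ∫⁻ x, ‖fderiv ℝ u x‖ₑ ^ 2 ∂ν) := by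
    have d1 : ∀ x, ∫⁻ y, (H x y + H y x) ∂ν = ∫⁻ y, H x y ∂ν + ∫⁻ y, H y x ∂ν := fun x =>
      lintegral_add_left (hHm.comp measurable_prodMk_left) _
    simp_rw [d1]
    rw [lintegral_add_left hHm.lintegral_prod_right]
    have d2 : ∫⁻ x, ∫⁻ y, H y x ∂ν ∂ν = ∫⁻ x, ∫⁻ y, H x y ∂ν ∂ν :=
      (lintegral_lintegral_swap hHm.aemeasurable).symm
    rw [d2, ← two_mul]
    gcongr
  have hfin : V ^ 2 * ∫⁻ x, ‖u x‖ₑ ^ 2 ∂ν ≤ V ^ 2 *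
      (ENNReal.ofReal (2 ^ n * D ^ 2) * ∫⁻ x, ‖fderiv ℝ u x‖ₑ ^ 2 ∂ν) := by
    have e : ENNReal.ofReal (2 ^ n * D ^ 2) =
        2 * ENNReal.ofReal (D ^ 2) * ENNReal.ofReal (2 ^ n * (1 / 2)) := by
      have : (2 : ℝ≥0∞) = ENNReal.ofReal 2 := by simp
      rw [this, ← ENNReal.ofReal_mul (by norm_num), ← ENNReal.ofReal_mul (by positivity)]
      congr 1
      ring
    calc V ^ 2 * ∫⁻ x, ‖u x‖ₑ ^ 2 ∂ν = ∫⁻ x, V ^ 2 * ‖u x‖ₑ ^ 2 ∂ν := by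
          rw [lintegral_const_mul' _ _ (ENNReal.pow_ne_top hVt)]
      _ ≤ ∫⁻ x, V * ENNReal.ofReal (D ^ 2) * ∫⁻ y, (H x y + H y x) ∂ν ∂ν := by
          refine lintegral_mono_ae ?_
          filter_upwards [hν] with x hx using hpt x hx
      _ = V * ENNReal.ofReal (D ^ 2) * ∫⁻ x, ∫⁻ y, (H x y + H y x) ∂ν ∂ν :=
          lintegral_const_mul' _ _ (ENNReal.mul_ne_top hVt ENNReal.ofReal_ne_top)
      _ ≤ _ := mul_le_mul_right hsum _
      _ = _ := by rw [e]; ring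
  exact (ENNReal.mul_le_mul_iff_right (pow_ne_zero 2 hν0) (ENNReal.pow_ne_top hVt)).1 hfin

theorem aux_quad (B C : ℝ) (h : ∀ s : ℝ, 0 ≤ 2 * s * B + s ^ 2 * C) : B ≤ 0 := by
  by_contra hB
  push Not at hB
  have hC : 0 < |C| + 1 := by positivity
  have h1 := h (-(B / (|C| + 1)))
  have h2 : C ≤ |C| + 1 := by linarith [le_abs_self C]
  have h3 : (B / (|C| + 1)) ^ 2 * C ≤ (B / (|C| + 1)) ^ 2 * (|C| + 1) := by gcongr
  have h4 : (B / (|C| + 1)) ^ 2 * (|C| + 1) = B / (|C| + 1) * B := by field_simp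
  have h5 : 0 < B / (|C| + 1) * B := by positivity
  nlinarith

theorem aux_EL {N : ℕ} (Ω : Set (EuclideanSpace ℝ (Fin N))) (hΩ : IsOpen Ω)
    (ν : Measure (EuclideanSpace ℝ (Fin N))) [IsFiniteMeasure ν] (hν : ∀ᵐ x ∂ν, x ∈ Ω)
    (hν0 : ν univ ≠ 0) (μ : ℝ)
    (u : EuclideanSpace ℝ (Fin N) → ℝ) (hu : ContDiffOn ℝ 1 u Ω) (hu2 : MemLp u 2 ν)
    (hu0 : ∫ x, u x ∂ν = 0) (hE : Integrable (fun x => ‖fderiv ℝ u x‖ ^ 2) ν)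
    (Heq : ∫ x, ‖fderiv ℝ u x‖ ^ 2 ∂ν = μ * ∫ x, u x ^ 2 ∂ν)
    (Hmin : ∀ w : EuclideanSpace ℝ (Fin N) → ℝ, ContDiffOn ℝ 1 w Ω → MemLp w 2 ν →
      ∫ x, w x ∂ν = 0 → Integrable (fun x => ‖fderiv ℝ w x‖ ^ 2) ν →
      μ * ∫ x, w x ^ 2 ∂ν ≤ ∫ x, ‖fderiv ℝ w x‖ ^ 2 ∂ν)
    (a G : ℝ → ℝ) (A : ℝ) (ha : Continuous a) (ha0 : ∀ s, 0 ≤ a s) (haA : ∀ s, a s ≤ A)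
    (hG : ∀ s, HasDerivAt G (a s) s) (hGA : ∀ s, |G s| ≤ A * |s|) :
    Integrable (fun x => a (u x) * ‖fderiv ℝ u x‖ ^ 2) ν ∧
    Integrable (fun x => u x * G (u x)) ν ∧
    ∫ x, a (u x) * ‖fderiv ℝ u x‖ ^ 2 ∂ν ≤ μ * ∫ x, u x * G (u x) ∂ν := by
  have hum : AEMeasurable u ν := aux_aem Ω hΩ ν hν u hu.continuousOn
  have hGC : ContDiff ℝ 1 G := by
    rw [contDiff_one_iff_deriv]
    refine ⟨fun s => (hG s).differentiableAt, ?_⟩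
    rw [show deriv G = a from funext fun s => (hG s).deriv]
    exact ha
  have hGum : AEStronglyMeasurable (fun x => G (u x)) ν :=
    (hGC.continuous.measurable.comp_aemeasurable hum).aestronglyMeasurable
  have hG2 : MemLp (fun x => G (u x)) 2 ν := by
    refine hu2.of_le_mul (c := A) hGum (Eventually.of_forall fun x => ?_)
    simpa using hGA (u x)
  set c : ℝ := (ν univ).toReal⁻¹ * ∫ x, G (u x) ∂ν with hcdef
  have hVr : (ν univ).toReal ≠ 0 := ENNReal.toReal_ne_zero.2 ⟨hν0, measure_ne_top _ _⟩
  have hGi : Integrable (fun x => G (u x)) ν := hG2.integrable (by norm_num)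
  have hui : Integrable u ν := hu2.integrable (by norm_num)
  have hg2 : MemLp (fun x => G (u x) - c) 2 ν := hG2.sub (memLp_const c)
  have hg0 : ∫ x, (G (u x) - c) ∂ν = 0 := by
    rw [integral_sub hGi (integrable_const _), integral_const, smul_eq_mul, hcdef, Measure.real,
      mul_inv_cancel_left₀ hVr, sub_self]
  have haum : AEStronglyMeasurable (fun x => a (u x)) ν :=
    (ha.measurable.comp_aemeasurable hum).aestronglyMeasurable
  have hae1 : Integrable (fun x => a (u x) * ‖fderiv ℝ u x‖ ^ 2) ν := by
    refine hE.bdd_mul (c := A) haum (Eventually.of_forall fun x => ?_)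
    rw [Real.norm_of_nonneg (ha0 _)]
    exact haA _
  have hae2 : Integrable (fun x => a (u x) * (a (u x) * ‖fderiv ℝ u x‖ ^ 2)) ν := by
    refine hae1.bdd_mul (c := A) haum (Eventually.of_forall fun x => ?_)
    rw [Real.norm_of_nonneg (ha0 _)]
    exact haA _
  have hug : Integrable (fun x => u x * (G (u x) - c)) ν := hu2.integrable_mul hg2
  have huG : Integrable (fun x => u x * G (u x)) ν := hu2.integrable_mul hG2
  refine ⟨hae1, huG, ?_⟩
  have huu : Integrable (fun x => u x ^ 2) ν := hu2.integrable_sq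
  have hgg : Integrable (fun x => (G (u x) - c) ^ 2) ν := hg2.integrable_sq
  have hugv : ∫ x, u x * (G (u x) - c) ∂ν = ∫ x, u x * G (u x) ∂ν := by
    have : (fun x => u x * (G (u x) - c)) = fun x => u x * G (u x) - u x * c := by
      ext x; ring
    rw [this, integral_sub huG (hui.mul_const c), integral_mul_const, hu0]
    ring
  rw [← sub_nonpos, ← hugv]
  refine aux_quad _ (∫ x, a (u x) * (a (u x) * ‖fderiv ℝ u x‖ ^ 2) ∂ν -
    μ * ∫ x, (G (u x) - c) ^ 2 ∂ν) fun s => ?_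
  have hwC : ContDiffOn ℝ 1 (fun x => u x + s * (G (u x) - c)) Ω := by
    have : ContDiffOn ℝ 1 (fun x => G (u x)) Ω := hGC.comp_contDiffOn hu
    exact hu.add (contDiffOn_const.mul (this.sub contDiffOn_const))
  have hw2 : MemLp (fun x => u x + s * (G (u x) - c)) 2 ν := hu2.add (hg2.const_mul s)
  have hw0 : ∫ x, (u x + s * (G (u x) - c)) ∂ν = 0 := by
    have hgi : Integrable (fun x => G (u x) - c) ν := hGi.sub (integrable_const c)
    rw [integral_add hui (hgi.const_mul s), integral_const_mul, hg0,
      hu0]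
    simp
  have hfd : ∀ᵐ x ∂ν, ‖fderiv ℝ (fun x => u x + s * (G (u x) - c)) x‖ ^ 2 =
      ‖fderiv ℝ u x‖ ^ 2 + 2 * s * (a (u x) * ‖fderiv ℝ u x‖ ^ 2) +
      s ^ 2 * (a (u x) * (a (u x) * ‖fderiv ℝ u x‖ ^ 2)) := by
    filter_upwards [hν] with x hx
    have hd : HasFDerivAt u (fderiv ℝ u x) x :=
      ((hu.differentiableOn one_ne_zero).differentiableAt (hΩ.mem_nhds hx)).hasFDerivAt
    have hd2 : HasFDerivAt (fun x => G (u x)) (a (u x) • fderiv ℝ u x) x :=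
      (hG (u x)).comp_hasFDerivAt x hd
    have hd3 : HasFDerivAt (fun x => u x + s * (G (u x) - c))
        (fderiv ℝ u x + s • (a (u x) • fderiv ℝ u x)) x :=
      hd.add ((hd2.sub_const c).const_mul s)
    have e : fderiv ℝ u x + s • (a (u x) • fderiv ℝ u x) = (1 + s * a (u x)) • fderiv ℝ u x := by
      module
    rw [hd3.fderiv, e, norm_smul, mul_pow, Real.norm_eq_abs, sq_abs]
    ring
  have hi1 : Integrable (fun x => ‖fderiv ℝ u x‖ ^ 2 + 2 * s * (a (u x) * ‖fderiv ℝ u x‖ ^ 2)) ν :=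
    hE.add (hae1.const_mul _)
  have hi2 := hae2.const_mul (s ^ 2)
  have hwE : Integrable (fun x => ‖fderiv ℝ (fun x => u x + s * (G (u x) - c)) x‖ ^ 2) ν :=
    (hi1.add hi2).congr (hfd.mono fun x hx => hx.symm)
  have hQ := Hmin _ hwC hw2 hw0 hwE
  rw [integral_congr_ae hfd, integral_add hi1 hi2, integral_add hE (hae1.const_mul _),
    integral_const_mul, integral_const_mul, Heq] at hQ
  have hexp : ∫ x, (u x + s * (G (u x) - c)) ^ 2 ∂ν = ∫ x, u x ^ 2 ∂ν +
      2 * s * ∫ x, u x * (G (u x) - c) ∂ν + s ^ 2 * ∫ x, (G (u x) - c) ^ 2 ∂ν := by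
    have : (fun x => (u x + s * (G (u x) - c)) ^ 2) = fun x => (u x ^ 2 +
        2 * s * (u x * (G (u x) - c))) + s ^ 2 * (G (u x) - c) ^ 2 := by
      ext x; ring
    have hi3 : Integrable (fun x => u x ^ 2 + 2 * s * (u x * (G (u x) - c))) ν :=
      huu.add (hug.const_mul _)
    rw [this, integral_add hi3 (hgg.const_mul _),
      integral_add huu (hug.const_mul _), integral_const_mul, integral_const_mul]
  rw [hexp] at hQ
  linarith

/-- The truncated power functions used in the Moser iteration. -/
theorem aux_trunc (q : ℕ) (hq : 1 ≤ q) (T : ℝ) (hT : 0 < T) :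
    ∃ (F b G : ℝ → ℝ) (A : ℝ), Continuous b ∧ (∀ s, HasDerivAt F (b s) s) ∧
      (∀ s, HasDerivAt G (b s ^ 2) s) ∧ (∀ s, b s ^ 2 ≤ A) ∧ (∀ s, |G s| ≤ A * |s|) ∧
      (∃ A', ∀ s, |F s| ≤ A' * |s|) ∧ (∀ s, 0 ≤ F s) ∧ (∀ s, F s ≤ (max s 0) ^ (q + 1)) ∧
      (∀ s, s ≤ T → F s = (max s 0) ^ (q + 1)) ∧
      (∀ s, s * G s ≤ ((q : ℝ) + 1) ^ 2 * F s ^ 2) := by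
  set b : ℝ → ℝ := fun r => (q + 1) * (max 0 (min r T)) ^ q with hb
  have hbc : Continuous b := by fun_prop
  have hb0 : ∀ r, 0 ≤ b r := fun r => by positivity
  have hbm : Monotone b := by
    intro r s hrs
    simp only [hb]
    gcongr
  have hbT : ∀ r, b r ≤ (q + 1) * T ^ q := by
    intro r
    simp only [hb]
    gcongr
    exact max_le hT.le (min_le_right _ _)
  have hbneg : ∀ r ≤ 0, b r = 0 := by
    intro r hr
    simp only [hb]
    rw [max_eq_left ((min_le_left _ _).trans hr), zero_pow (by omega), mul_zero]
  have hb2c : Continuous fun r => b r ^ 2 := by fun_prop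
  have hb2T : ∀ r, b r ^ 2 ≤ ((q + 1) * T ^ q) ^ 2 := fun r =>
    pow_le_pow_left₀ (hb0 r) (hbT r) 2
  have hFneg : ∀ s ≤ 0, ∫ r in (0 : ℝ)..s, b r = 0 := by
    intro s hs
    rw [intervalIntegral.integral_congr (g := fun _ => (0 : ℝ))]
    · simp
    · intro r hr
      rw [uIcc_of_ge hs] at hr
      exact hbneg r hr.2
  have hFmid : ∀ s, 0 ≤ s → s ≤ T → ∫ r in (0 : ℝ)..s, b r = s ^ (q + 1) := by
    intro s hs hsT
    rw [intervalIntegral.integral_congr (g := fun r : ℝ => ((q : ℝ) + 1) * r ^ q)]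
    · rw [intervalIntegral.integral_const_mul, integral_pow]
      rw [zero_pow (by omega), sub_zero]
      field_simp
    · intro r hr
      rw [uIcc_of_le hs] at hr
      simp only [hb]
      rw [min_eq_left (hr.2.trans hsT), max_eq_right hr.1]
  have hFbig : ∀ s, T ≤ s → ∫ r in (0 : ℝ)..s, b r = T ^ (q + 1) + (s - T) * ((q + 1) * T ^ q) := by
    intro s hs
    rw [← intervalIntegral.integral_add_adjacent_intervals (hbc.intervalIntegrable 0 T)
      (hbc.intervalIntegrable T s), hFmid T hT.le le_rfl]
    congr 1
    rw [intervalIntegral.integral_congr (g := fun r : ℝ => ((q : ℝ) + 1) * T ^ q)]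
    · rw [intervalIntegral.integral_const, smul_eq_mul]
    · intro r hr
      rw [uIcc_of_le hs] at hr
      simp only [hb]
      rw [min_eq_right hr.1, max_eq_right hT.le]
  have hF0 : ∀ s, 0 ≤ ∫ r in (0 : ℝ)..s, b r := by
    intro s
    rcases le_total s 0 with hs | hs
    · rw [hFneg s hs]
    · exact intervalIntegral.integral_nonneg hs fun r _ => hb0 r
  refine ⟨fun s => ∫ r in (0 : ℝ)..s, b r, b, fun s => ∫ r in (0 : ℝ)..s, b r ^ 2,
    ((q + 1) * T ^ q) ^ 2, hbc, fun s => (hbc.integral_hasStrictDerivAt 0 s).hasDerivAt,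
    fun s => (hb2c.integral_hasStrictDerivAt 0 s).hasDerivAt, hb2T, ?_,
    ⟨(q + 1) * T ^ q, ?_⟩, hF0, ?_, ?_, ?_⟩
  · intro s
    have := intervalIntegral.norm_integral_le_of_norm_le_const (a := 0) (b := s)
      (f := fun r => b r ^ 2) (C := ((q + 1) * T ^ q) ^ 2) (fun r _ => by
        rw [Real.norm_of_nonneg (by positivity)]; exact hb2T r)
    simpa using this
  · intro s
    have := intervalIntegral.norm_integral_le_of_norm_le_const (a := 0) (b := s)
      (f := b) (C := (q + 1) * T ^ q) (fun r _ => by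
        rw [Real.norm_of_nonneg (hb0 r)]; exact hbT r)
    simpa using this
  · intro s
    rcases le_total s 0 with hs | hs
    · simp only [hFneg s hs]; positivity
    · rw [max_eq_left hs]
      calc ∫ r in (0 : ℝ)..s, b r ≤ ∫ r in (0 : ℝ)..s, ((q : ℝ) + 1) * r ^ q := by
            refine intervalIntegral.integral_mono_on hs (hbc.intervalIntegrable _ _)
              (Continuous.intervalIntegrable (by fun_prop) _ _) fun r hr => ?_
            simp only [hb]
            gcongr
            exact max_le hr.1 (min_le_left _ _)
        _ = s ^ (q + 1) := by
          rw [intervalIntegral.integral_const_mul, integral_pow]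
          rw [zero_pow (by omega), sub_zero]
          field_simp
  · intro s hsT
    rcases le_total s 0 with hs | hs
    · simp only [hFneg s hs]; rw [max_eq_right hs, zero_pow (by omega)]
    · simp only [hFmid s hs hsT]; rw [max_eq_left hs]
  · intro s
    rcases le_total s 0 with hs | hs
    · have : ∫ r in (0 : ℝ)..s, b r ^ 2 = 0 := by
        rw [intervalIntegral.integral_congr (g := fun _ => (0 : ℝ))]
        · simp
        · intro r hr
          rw [uIcc_of_ge hs] at hr
          simp [hbneg r hr.2]
      simp only [this, mul_zero]
      positivity
    · have h1 : ∫ r in (0 : ℝ)..s, b r ^ 2 ≤ s * b s ^ 2 := by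
        have := intervalIntegral.integral_mono_on hs (hb2c.intervalIntegrable 0 s)
          (continuous_const.intervalIntegrable (μ := volume) 0 s) fun r hr =>
            pow_le_pow_left₀ (hb0 r) (hbm hr.2) 2
        simpa using this
      have h2 : s * b s ≤ (q + 1) * ∫ r in (0 : ℝ)..s, b r := by
        rcases le_total s T with hsT | hsT
        · rw [hFmid s hs hsT]
          simp only [hb]
          rw [min_eq_left hsT, max_eq_right hs]
          apply le_of_eq; ring
        · rw [hFbig s hsT]
          simp only [hb]
          rw [min_eq_right hsT, max_eq_right hT.le]
          have : s * T ^ q ≤ T ^ (q + 1) + (s - T) * ((q + 1) * T ^ q) := by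
            have h3 : 0 ≤ (s - T) * (q * T ^ q) :=
              mul_nonneg (sub_nonneg.2 hsT) (by positivity)
            have h4 : T ^ (q + 1) + (s - T) * ((q + 1) * T ^ q) =
              s * T ^ q + (s - T) * (q * T ^ q) := by ring
            linarith
          calc s * (((q : ℝ) + 1) * T ^ q) = (q + 1) * (s * T ^ q) := by ring
            _ ≤ _ := by gcongr
      calc s * ∫ r in (0 : ℝ)..s, b r ^ 2 ≤ s * (s * b s ^ 2) := by gcongr
        _ = (s * b s) ^ 2 := by ring
        _ ≤ ((q + 1) * ∫ r in (0 : ℝ)..s, b r) ^ 2 :=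
          pow_le_pow_left₀ (mul_nonneg hs (hb0 s)) h2 2
        _ = _ := by ring

theorem aux_lint_sq {α : Type*} [MeasurableSpace α] (ν : Measure α) (f : α → ℝ)
    (hf : Integrable (fun x => f x ^ 2) ν) :
    ∫⁻ x, ‖f x‖ₑ ^ 2 ∂ν = ENNReal.ofReal (∫ x, f x ^ 2 ∂ν) := by
  rw [ofReal_integral_eq_lintegral_ofReal hf (Eventually.of_forall fun x => sq_nonneg _)]
  refine lintegral_congr fun x => ?_
  rw [← ofReal_norm, ← ENNReal.ofReal_pow (norm_nonneg _), Real.norm_eq_abs, sq_abs]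

theorem aux_stepT {N n : ℕ} (Ω : Set (EuclideanSpace ℝ (Fin N))) (hΩ : IsOpen Ω)
    (hc : Convex ℝ Ω) (D : ℝ) (hD : ∀ x ∈ Ω, ∀ y ∈ Ω, dist x y ≤ D)
    (ν : Measure (EuclideanSpace ℝ (Fin N))) [IsFiniteMeasure ν] (hν : ∀ᵐ x ∂ν, x ∈ Ω)
    (hν0 : ν univ ≠ 0)
    (HC : ∀ y ∈ Ω, ∀ t : ℝ, 0 < t → t ≤ 1 → ∀ g : EuclideanSpace ℝ (Fin N) → ℝ≥0∞,
      ∫⁻ x, g (y + t • (x - y)) ∂ν ≤ ENNReal.ofReal ((t ^ n)⁻¹) * ∫⁻ x, g x ∂ν)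
    (μ : ℝ) (hμ0 : 0 ≤ μ) (hμ : 1 ≤ 2 ^ n * D ^ 2 * μ)
    (u : EuclideanSpace ℝ (Fin N) → ℝ) (hu : ContDiffOn ℝ 1 u Ω) (hu2 : MemLp u 2 ν)
    (hu0 : ∫ x, u x ∂ν = 0) (hE : Integrable (fun x => ‖fderiv ℝ u x‖ ^ 2) ν)
    (Heq : ∫ x, ‖fderiv ℝ u x‖ ^ 2 ∂ν = μ * ∫ x, u x ^ 2 ∂ν)
    (Hmin : ∀ w : EuclideanSpace ℝ (Fin N) → ℝ, ContDiffOn ℝ 1 w Ω → MemLp w 2 ν →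
      ∫ x, w x ∂ν = 0 → Integrable (fun x => ‖fderiv ℝ w x‖ ^ 2) ν →
      μ * ∫ x, w x ^ 2 ∂ν ≤ ∫ x, ‖fderiv ℝ w x‖ ^ 2 ∂ν)
    (q : ℕ) (hq : 1 ≤ q) (T : ℝ) (hT : 0 < T) :
    ∃ F : ℝ → ℝ, Continuous F ∧ (∀ s ≤ T, F s = (max s 0) ^ (q + 1)) ∧
    ν univ * ∫⁻ x, ‖F (u x)‖ₑ ^ 2 ∂ν ≤
      4 * ENNReal.ofReal ((4 * 2 ^ n * D ^ 2 * μ * ((q : ℝ) + 1) ^ 2) ^ n) *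
        (∫⁻ x, ENNReal.ofReal (max (u x) 0) ^ (q + 1) ∂ν) ^ 2 := by
  obtain ⟨F, b, G, A, hbc, hF, hG, hbA, hGA, ⟨A', hFA⟩, hF0, hFle, hFT, hsG⟩ := aux_trunc q hq T hT
  have hFcont : Continuous F := continuous_iff_continuousAt.2 fun s => (hF s).continuousAt
  refine ⟨F, hFcont, hFT, ?_⟩
  have hVt : ν univ ≠ ∞ := measure_ne_top _ _
  obtain ⟨i1, i2, hEL⟩ := aux_EL Ω hΩ ν hν hν0 μ u hu hu2 hu0 hE Heq Hmin (fun s => b s ^ 2) G A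
    (by fun_prop) (fun s => sq_nonneg _) hbA hG hGA
  have hum : AEMeasurable u ν := aux_aem Ω hΩ ν hν u hu.continuousOn
  have hFC : ContDiff ℝ 1 F := by
    rw [contDiff_one_iff_deriv]
    refine ⟨fun s => (hF s).differentiableAt, ?_⟩
    rw [show deriv F = b from funext fun s => (hF s).deriv]
    exact hbc
  have hfC : ContDiffOn ℝ 1 (fun x => F (u x)) Ω := hFC.comp_contDiffOn hu
  have hf2 : MemLp (fun x => F (u x)) 2 ν := by
    refine hu2.of_le_mul (c := A')
      (hFcont.measurable.comp_aemeasurable hum).aestronglyMeasurable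
      (Eventually.of_forall fun x => ?_)
    simpa using hFA (u x)
  have hff := hf2.integrable_sq
  -- energy bound
  have hen : ∫⁻ x, ‖fderiv ℝ (fun x => F (u x)) x‖ₑ ^ 2 ∂ν ≤
      ENNReal.ofReal (μ * ((q : ℝ) + 1) ^ 2) * ∫⁻ x, ‖F (u x)‖ₑ ^ 2 ∂ν := by
    have e1 : ∫⁻ x, ‖fderiv ℝ (fun x => F (u x)) x‖ₑ ^ 2 ∂ν =
        ENNReal.ofReal (∫ x, b (u x) ^ 2 * ‖fderiv ℝ u x‖ ^ 2 ∂ν) := by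
      rw [ofReal_integral_eq_lintegral_ofReal i1 (Eventually.of_forall fun x => by positivity)]
      refine lintegral_congr_ae ?_
      filter_upwards [hν] with x hx
      have hd : HasFDerivAt u (fderiv ℝ u x) x :=
        ((hu.differentiableOn one_ne_zero).differentiableAt (hΩ.mem_nhds hx)).hasFDerivAt
      have hd2 : HasFDerivAt (fun x => F (u x)) (b (u x) • fderiv ℝ u x) x :=
        (hF (u x)).comp_hasFDerivAt x hd
      rw [hd2.fderiv, ← ofReal_norm, ← ENNReal.ofReal_pow (norm_nonneg _), norm_smul, mul_pow,
        Real.norm_eq_abs, sq_abs]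
    rw [e1, aux_lint_sq ν _ hff, ← ENNReal.ofReal_mul (by positivity)]
    refine ENNReal.ofReal_le_ofReal (hEL.trans ?_)
    rw [mul_assoc]
    gcongr
    rw [← integral_const_mul]
    exact integral_mono i2 (hff.const_mul _) fun x => hsG (u x)
  set Z : ℝ := 4 * 2 ^ n * D ^ 2 * μ * ((q : ℝ) + 1) ^ 2 with hZ
  have hZ4 : 4 ≤ Z := by
    have : (1 : ℝ) ≤ ((q : ℝ) + 1) ^ 2 := by nlinarith [(Nat.cast_nonneg q : (0 : ℝ) ≤ q)]
    have h2 : (1 : ℝ) ≤ (2 ^ n * D ^ 2 * μ) * ((q : ℝ) + 1) ^ 2 := one_le_mul_of_one_le_of_one_le hμ this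
    rw [hZ]; linarith
  have hZ0 : 0 < Z := by linarith
  set ε : ℝ := (Real.sqrt Z)⁻¹ with hε
  have hsZ : 0 < Real.sqrt Z := Real.sqrt_pos.2 hZ0
  have hε0 : 0 < ε := inv_pos.2 hsZ
  have hε1 : ε ≤ 1 / 2 := by
    rw [hε, one_div]
    refine inv_anti₀ (by norm_num) (Real.le_sqrt_of_sq_le (by linarith))
  have hε2 : ε ^ 2 = Z⁻¹ := by rw [hε, inv_pow, Real.sq_sqrt hZ0.le]
  have hN := aux_nash Ω hΩ hc D hD ν hν hν0 HC (fun x => F (u x)) hfC ε hε0 hε1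
  set I := ∫⁻ x, ‖F (u x)‖ₑ ^ 2 ∂ν with hI
  have hIt : I ≠ ∞ := by rw [hI, aux_lint_sq ν _ hff]; exact ENNReal.ofReal_ne_top
  set P := ∫⁻ x, ENNReal.ofReal (max (u x) 0) ^ (q + 1) ∂ν with hP
  have hLP : ∫⁻ x, ‖F (u x)‖ₑ ∂ν ≤ P := by
    refine lintegral_mono fun x => ?_
    rw [Real.enorm_of_nonneg (hF0 _), ← ENNReal.ofReal_pow (le_max_right _ _)]
    exact ENNReal.ofReal_le_ofReal (hFle _)
  have hZn : ENNReal.ofReal ((ε ^ n)⁻¹) ^ 2 = ENNReal.ofReal (Z ^ n) := by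
    rw [← ENNReal.ofReal_pow (by positivity)]
    congr 1
    rw [← inv_pow, ← pow_mul, mul_comm n 2, pow_mul, inv_pow, hε2, inv_inv]
  have hmain : ν univ * I ≤ ENNReal.ofReal (1 / 2) * (ν univ * I) +
      2 * (ENNReal.ofReal (Z ^ n) * P ^ 2) := by
    refine hN.trans ?_
    rw [mul_pow, hZn]
    gcongr ?_ + 2 * (_ * ?_ ^ 2)
    calc ENNReal.ofReal (2 * 2 ^ n * ε ^ 2 * D ^ 2) * ν univ *
          ∫⁻ x, ‖fderiv ℝ (fun x => F (u x)) x‖ₑ ^ 2 ∂ν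
        ≤ ENNReal.ofReal (2 * 2 ^ n * ε ^ 2 * D ^ 2) * ν univ *
          (ENNReal.ofReal (μ * ((q : ℝ) + 1) ^ 2) * I) := by gcongr
      _ = ENNReal.ofReal (2 * 2 ^ n * ε ^ 2 * D ^ 2) * ENNReal.ofReal (μ * ((q : ℝ) + 1) ^ 2) *
          (ν univ * I) := by ring
      _ = ENNReal.ofReal (1 / 2) * (ν univ * I) := by
        rw [← ENNReal.ofReal_mul (by positivity)]
        congr 2
        rw [hε2]
        have : 2 * 2 ^ n * Z⁻¹ * D ^ 2 * (μ * ((q : ℝ) + 1) ^ 2) = Z⁻¹ * Z / 2 := by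
          rw [hZ]; ring
        rw [this, inv_mul_cancel₀ hZ0.ne']
  have hVI : ν univ * I ≠ ∞ := ENNReal.mul_ne_top hVt hIt
  have hsplit : ν univ * I = ENNReal.ofReal (1 / 2) * (ν univ * I) +
      ENNReal.ofReal (1 / 2) * (ν univ * I) := by
    rw [← add_mul, ← ENNReal.ofReal_add (by norm_num) (by norm_num)]
    norm_num
  have hhalf : ENNReal.ofReal (1 / 2) * (ν univ * I) ≤ 2 * (ENNReal.ofReal (Z ^ n) * P ^ 2) := by
    exact (ENNReal.add_le_add_iff_left (ENNReal.mul_ne_top ENNReal.ofReal_ne_top hVI)).1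
      (hsplit.symm.le.trans hmain)
  calc ν univ * I = 2 * (ENNReal.ofReal (1 / 2) * (ν univ * I)) := by
        rw [two_mul]; exact hsplit
    _ ≤ 2 * (2 * (ENNReal.ofReal (Z ^ n) * P ^ 2)) := by gcongr
    _ = _ := by ring

theorem aux_step {N n : ℕ} (Ω : Set (EuclideanSpace ℝ (Fin N))) (hΩ : IsOpen Ω)
    (hc : Convex ℝ Ω) (D : ℝ) (hD : ∀ x ∈ Ω, ∀ y ∈ Ω, dist x y ≤ D)
    (ν : Measure (EuclideanSpace ℝ (Fin N))) [IsFiniteMeasure ν] (hν : ∀ᵐ x ∂ν, x ∈ Ω)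
    (hν0 : ν univ ≠ 0)
    (HC : ∀ y ∈ Ω, ∀ t : ℝ, 0 < t → t ≤ 1 → ∀ g : EuclideanSpace ℝ (Fin N) → ℝ≥0∞,
      ∫⁻ x, g (y + t • (x - y)) ∂ν ≤ ENNReal.ofReal ((t ^ n)⁻¹) * ∫⁻ x, g x ∂ν)
    (μ : ℝ) (hμ0 : 0 ≤ μ) (hμ : 1 ≤ 2 ^ n * D ^ 2 * μ)
    (u : EuclideanSpace ℝ (Fin N) → ℝ) (hu : ContDiffOn ℝ 1 u Ω) (hu2 : MemLp u 2 ν)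
    (hu0 : ∫ x, u x ∂ν = 0) (hE : Integrable (fun x => ‖fderiv ℝ u x‖ ^ 2) ν)
    (Heq : ∫ x, ‖fderiv ℝ u x‖ ^ 2 ∂ν = μ * ∫ x, u x ^ 2 ∂ν)
    (Hmin : ∀ w : EuclideanSpace ℝ (Fin N) → ℝ, ContDiffOn ℝ 1 w Ω → MemLp w 2 ν →
      ∫ x, w x ∂ν = 0 → Integrable (fun x => ‖fderiv ℝ w x‖ ^ 2) ν →
      μ * ∫ x, w x ^ 2 ∂ν ≤ ∫ x, ‖fderiv ℝ w x‖ ^ 2 ∂ν)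
    (p : ℕ) (hp : 2 ≤ p) :
    ν univ * ∫⁻ x, ENNReal.ofReal (max (u x) 0) ^ (2 * p) ∂ν ≤
      4 * ENNReal.ofReal ((4 * 2 ^ n * D ^ 2 * μ * (p : ℝ) ^ 2) ^ n) *
        (∫⁻ x, ENNReal.ofReal (max (u x) 0) ^ p ∂ν) ^ 2 := by
  obtain ⟨q, rfl⟩ : ∃ q, p = q + 1 := ⟨p - 1, by omega⟩
  have hq : 1 ≤ q := by omega
  have hum : AEMeasurable u ν := aux_aem Ω hΩ ν hν u hu.continuousOn
  have hVt : ν univ ≠ ∞ := measure_ne_top _ _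
  choose F hFc hFT hFb using fun k : ℕ => aux_stepT Ω hΩ hc D hD ν hν hν0 HC μ hμ0 hμ u hu hu2 hu0
    hE Heq Hmin q hq ((k : ℝ) + 1) (by positivity)
  push_cast
  set R := 4 * ENNReal.ofReal ((4 * 2 ^ n * D ^ 2 * μ * ((q : ℝ) + 1) ^ 2) ^ n) *
        (∫⁻ x, ENNReal.ofReal (max (u x) 0) ^ (q + 1) ∂ν) ^ 2 with hR
  have hfat := lintegral_liminf_le' (μ := ν) (u := atTop) (f := fun (k : ℕ) x => ‖F k (u x)‖ₑ ^ 2)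
    (fun k => (((hFc k).measurable.comp_aemeasurable hum).enorm.pow_const 2))
  have hlim : ∀ x, liminf (fun k : ℕ => ‖F k (u x)‖ₑ ^ 2) atTop =
      ENNReal.ofReal (max (u x) 0) ^ (2 * (q + 1)) := by
    intro x
    refine Tendsto.liminf_eq ?_
    refine tendsto_const_nhds.congr' ?_
    obtain ⟨K, hK⟩ := exists_nat_ge (u x)
    filter_upwards [eventually_ge_atTop K] with k hk
    have : u x ≤ (k : ℝ) + 1 := by
      have : (K : ℝ) ≤ k := by exact_mod_cast hk
      linarith
    rw [hFT k _ this, Real.enorm_of_nonneg (by positivity), ENNReal.ofReal_pow (le_max_right _ _)]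
    ring
  simp_rw [hlim] at hfat
  have hk : ∀ k : ℕ, ∫⁻ x, ‖F k (u x)‖ₑ ^ 2 ∂ν ≤ R / ν univ := by
    intro k
    rw [ENNReal.le_div_iff_mul_le (Or.inl hν0) (Or.inl hVt), mul_comm]
    exact hFb k
  have h2 : ∫⁻ x, ENNReal.ofReal (max (u x) 0) ^ (2 * (q + 1)) ∂ν ≤ R / ν univ := by
    refine hfat.trans ?_
    refine (liminf_le_liminf (Eventually.of_forall hk)).trans ?_
    simp
  rw [ENNReal.le_div_iff_mul_le (Or.inl hν0) (Or.inl hVt), mul_comm] at h2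
  exact h2

theorem aux_iter (n : ℕ) (I : ℕ → ℝ≥0∞) (V K c l : ℝ) (hV : 0 < V) (hK : 0 < K) (hc : 0 < c)
    (hl : 0 < l) (hI1 : I 1 ≠ ∞)
    (hstep : ∀ k, 1 ≤ k → ENNReal.ofReal V * I (k + 1) ≤
      ENNReal.ofReal (K * 4 ^ (n * k)) * I k ^ 2)
    (hlow : ∀ k, ENNReal.ofReal (c * l ^ (2 ^ k)) ≤ I k) :
    l ^ 2 ≤ K * 16 ^ n * (I 1).toReal / V := by
  set Y := K * 16 ^ n * (I 1).toReal / V with hY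
  have hY0 : 0 ≤ Y := by positivity
  have hP : ∀ j : ℕ, I (j + 1) ≤ ENNReal.ofReal (V * Y ^ (2 ^ j) / (K * 4 ^ (n * (j + 2)))) := by
    intro j
    induction j with
    | zero =>
      have h16 : (4 : ℝ) ^ (n * (0 + 2)) = 16 ^ n := by
        rw [mul_comm, pow_mul]; norm_num
      rw [h16]
      have : V * Y ^ (2 ^ 0) / (K * 16 ^ n) = (I 1).toReal := by
        rw [pow_zero, pow_one, hY]; field_simp
      rw [this, ENNReal.ofReal_toReal hI1]
    | succ j ih =>
      have h1 := hstep (j + 1) (by omega)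
      have h2 : ENNReal.ofReal (K * 4 ^ (n * (j + 1))) * I (j + 1) ^ 2 ≤
          ENNReal.ofReal V *
            ENNReal.ofReal (V * Y ^ (2 ^ (j + 1)) / (K * 4 ^ (n * (j + 1 + 2)))) := by
        calc _ ≤ ENNReal.ofReal (K * 4 ^ (n * (j + 1))) *
              ENNReal.ofReal (V * Y ^ (2 ^ j) / (K * 4 ^ (n * (j + 2)))) ^ 2 := by gcongr
          _ = _ := by
            rw [← ENNReal.ofReal_pow (by positivity), ← ENNReal.ofReal_mul (by positivity),
              ← ENNReal.ofReal_mul (by positivity)]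
            congr 1
            have e1 : Y ^ (2 ^ (j + 1)) = (Y ^ (2 ^ j)) ^ 2 := by
              rw [← pow_mul, pow_succ]
            have e2 : (4 : ℝ) ^ (n * (j + 1)) * 4 ^ (n * (j + 1 + 2)) = (4 ^ (n * (j + 2))) ^ 2 := by
              rw [← pow_mul, ← pow_add]; congr 1; ring
            rw [e1, div_pow, mul_pow, mul_pow, ← e2]
            field_simp
      exact (ENNReal.mul_le_mul_iff_right (ENNReal.ofReal_pos.2 hV).ne' ENNReal.ofReal_ne_top).1
        (h1.trans h2)
  by_contra! hlt
  have hl2 : 0 < l ^ 2 := by positivity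
  have hr0 : 0 ≤ Y / l ^ 2 := by positivity
  have hr1 : Y / l ^ 2 < 1 := (div_lt_one hl2).2 hlt
  obtain ⟨j, hj⟩ := exists_pow_lt_of_lt_one (show 0 < c * K / V by positivity) hr1
  have h3 : (Y / l ^ 2) ^ (2 ^ j) < c * K / V :=
    (pow_le_pow_of_le_one hr0 hr1.le j.lt_two_pow_self.le).trans_lt hj
  have h4 := (hlow (j + 1)).trans (hP j)
  rw [ENNReal.ofReal_le_ofReal_iff (by positivity)] at h4
  have h5 : V * Y ^ (2 ^ j) / (K * 4 ^ (n * (j + 2))) ≤ V * Y ^ (2 ^ j) / K := by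
    apply div_le_div_of_nonneg_left (by positivity) hK
    exact le_mul_of_one_le_right hK.le (one_le_pow₀ (by norm_num))
  have h6 : l ^ (2 ^ (j + 1)) = (l ^ 2) ^ (2 ^ j) := by
    rw [← pow_mul, pow_succ, mul_comm]
  rw [h6] at h4
  have h7 := h4.trans h5
  rw [div_pow, div_lt_div_iff₀ (by positivity) hV] at h3
  rw [le_div_iff₀ hK] at h7
  nlinarith

theorem aux_sup {N n : ℕ} (Ω : Set (EuclideanSpace ℝ (Fin N))) (hΩ : IsOpen Ω)
    (hc : Convex ℝ Ω) (D : ℝ) (hD : ∀ x ∈ Ω, ∀ y ∈ Ω, dist x y ≤ D)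
    (ν : Measure (EuclideanSpace ℝ (Fin N))) [IsFiniteMeasure ν] (hν : ∀ᵐ x ∂ν, x ∈ Ω)
    (hν0 : ν univ ≠ 0) (hpos : ∀ U ⊆ Ω, IsOpen U → U.Nonempty → ν U ≠ 0)
    (HC : ∀ y ∈ Ω, ∀ t : ℝ, 0 < t → t ≤ 1 → ∀ g : EuclideanSpace ℝ (Fin N) → ℝ≥0∞,
      ∫⁻ x, g (y + t • (x - y)) ∂ν ≤ ENNReal.ofReal ((t ^ n)⁻¹) * ∫⁻ x, g x ∂ν)
    (μ : ℝ) (hμ0 : 0 ≤ μ) (hμ : 1 ≤ 2 ^ n * D ^ 2 * μ)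
    (u : EuclideanSpace ℝ (Fin N) → ℝ) (hu : ContDiffOn ℝ 1 u Ω) (hu2 : MemLp u 2 ν)
    (hu0 : ∫ x, u x ∂ν = 0) (hE : Integrable (fun x => ‖fderiv ℝ u x‖ ^ 2) ν)
    (Heq : ∫ x, ‖fderiv ℝ u x‖ ^ 2 ∂ν = μ * ∫ x, u x ^ 2 ∂ν)
    (Hmin : ∀ w : EuclideanSpace ℝ (Fin N) → ℝ, ContDiffOn ℝ 1 w Ω → MemLp w 2 ν →
      ∫ x, w x ∂ν = 0 → Integrable (fun x => ‖fderiv ℝ w x‖ ^ 2) ν →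
      μ * ∫ x, w x ^ 2 ∂ν ≤ ∫ x, ‖fderiv ℝ w x‖ ^ 2 ∂ν)
    (x : EuclideanSpace ℝ (Fin N)) (hx : x ∈ Ω) (hux : 0 < u x) :
    u x ^ 2 ≤ 4 * (4 * 2 ^ n * D ^ 2 * μ) ^ n * 16 ^ n * (∫ x, u x ^ 2 ∂ν) / ν.real univ := by
  have hVt : ν univ ≠ ∞ := measure_ne_top _ _
  have hVpos : 0 < ν.real univ := ENNReal.toReal_pos hν0 hVt
  have hVo : ENNReal.ofReal (ν.real univ) = ν univ := ENNReal.ofReal_toReal hVt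
  set I : ℕ → ℝ≥0∞ := fun k => ∫⁻ x, ENNReal.ofReal (max (u x) 0) ^ (2 ^ k) ∂ν with hI
  have hi2 : Integrable (fun x => u x ^ 2) ν := hu2.integrable_sq
  have hI1le : I 1 ≤ ENNReal.ofReal (∫ x, u x ^ 2 ∂ν) := by
    rw [ofReal_integral_eq_lintegral_ofReal hi2 (ae_of_all _ fun x => sq_nonneg _)]
    refine lintegral_mono fun x => ?_
    rw [pow_one, ← ENNReal.ofReal_pow (le_max_right _ _)]
    refine ENNReal.ofReal_le_ofReal ?_
    rcases le_total (u x) 0 with h | h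
    · rw [max_eq_right h, zero_pow (by norm_num)]; exact sq_nonneg _
    · rw [max_eq_left h]
  have hI1 : I 1 ≠ ∞ := (hI1le.trans_lt ENNReal.ofReal_lt_top).ne
  have hZ : 0 < 4 * 2 ^ n * D ^ 2 * μ := by nlinarith
  set K := 4 * (4 * 2 ^ n * D ^ 2 * μ) ^ n with hK
  have hKpos : 0 < K := by positivity
  have hstep : ∀ k, 1 ≤ k → ENNReal.ofReal (ν.real univ) * I (k + 1) ≤
      ENNReal.ofReal (K * 4 ^ (n * k)) * I k ^ 2 := by
    intro k hk
    have h2k : 2 ≤ 2 ^ k := by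
      calc 2 = 2 ^ 1 := rfl
        _ ≤ 2 ^ k := Nat.pow_le_pow_right (by norm_num) hk
    have h := aux_step Ω hΩ hc D hD ν hν hν0 HC μ hμ0 hμ u hu hu2 hu0 hE Heq Hmin (2 ^ k) h2k
    rw [hVo]
    have e1 : (2 * 2 ^ k : ℕ) = 2 ^ (k + 1) := by rw [pow_succ, mul_comm]
    rw [e1] at h
    refine h.trans (le_of_eq ?_)
    congr 1
    rw [show (4 : ℝ≥0∞) = ENNReal.ofReal 4 by norm_num, ← ENNReal.ofReal_mul (by norm_num)]
    congr 1
    have e2 : ((((2 ^ k : ℕ) : ℝ) ^ 2) ^ n) = 4 ^ (n * k) := by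
      push_cast
      rw [← pow_mul, ← pow_mul, show (4 : ℝ) = 2 ^ 2 by norm_num, ← pow_mul]
      congr 1; ring
    rw [hK, mul_pow _ (((2 ^ k : ℕ) : ℝ) ^ 2) n, e2]
    ring
  have main : ∀ l, 0 < l → l < u x → l ^ 2 ≤ K * 16 ^ n * (I 1).toReal / ν.real univ := by
    intro l hl hlx
    set U := Ω ∩ u ⁻¹' (Ioi l) with hU
    have hUo : IsOpen U := hu.continuousOn.isOpen_inter_preimage hΩ isOpen_Ioi
    have hU0 : ν U ≠ 0 := hpos U inter_subset_left hUo ⟨x, hx, hlx⟩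
    have hUt : ν U ≠ ∞ := measure_ne_top _ _
    refine aux_iter n I (ν.real univ) K (ν.real U) l hVpos hKpos (ENNReal.toReal_pos hU0 hUt) hl hI1
      hstep ?_
    intro k
    rw [ENNReal.ofReal_mul measureReal_nonneg, mul_comm]
    have : ENNReal.ofReal (ν.real U) = ν U := ENNReal.ofReal_toReal hUt
    rw [this, ← setLIntegral_const]
    refine (setLIntegral_mono_ae' hUo.measurableSet (ae_of_all _ fun y hy => ?_)).trans
      (setLIntegral_le_lintegral _ _)
    rw [ENNReal.ofReal_pow hl.le]
    gcongr
    exact (le_of_lt hy.2).trans (le_max_left _ _)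
  have h1 : (I 1).toReal ≤ ∫ x, u x ^ 2 ∂ν :=
    ENNReal.toReal_le_of_le_ofReal (integral_nonneg fun x => sq_nonneg _) hI1le
  have h2 : u x ^ 2 ≤ K * 16 ^ n * (I 1).toReal / ν.real univ := by
    refine le_of_tendsto (f := fun l : ℝ => l ^ 2) (x := nhdsWithin (u x) (Iio (u x)))
      (((continuous_pow 2).tendsto (u x)).mono_left nhdsWithin_le_nhds) ?_
    filter_upwards [Ioo_mem_nhdsLT hux] with l hl using main l hl.1 hl.2
  refine h2.trans ?_
  gcongr

theorem aux_conv {N : ℕ} (Ω : Set (EuclideanSpace ℝ (Fin N)))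
    (φ : EuclideanSpace ℝ (Fin N) → ℝ) (hi : IntegrableOn φ Ω)
    (f : EuclideanSpace ℝ (Fin N) → ℝ) (hf : ∀ x, 0 ≤ f x) :
    ∫⁻ x in Ω, ENNReal.ofReal (f x * φ x) =
      ∫⁻ x, ENNReal.ofReal (f x)
        ∂((volume.restrict Ω).withDensity (fun x => ENNReal.ofReal (φ x))) := by
  rw [lintegral_withDensity_eq_lintegral_mul_non_measurable₀ _
    hi.aestronglyMeasurable.aemeasurable.ennreal_ofReal (by simp)]
  refine lintegral_congr fun x => ?_
  rw [ENNReal.ofReal_mul (hf x), Pi.mul_apply, mul_comm]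

theorem aux_conv_int {N : ℕ} (Ω : Set (EuclideanSpace ℝ (Fin N))) (hΩ : IsOpen Ω)
    (φ : EuclideanSpace ℝ (Fin N) → ℝ) (hφ : ∀ x ∈ Ω, 0 < φ x) (hi : IntegrableOn φ Ω)
    (f : EuclideanSpace ℝ (Fin N) → ℝ) :
    ∫ x in Ω, f x * φ x =
      ∫ x, f x ∂((volume.restrict Ω).withDensity (fun x => ENNReal.ofReal (φ x))) := by
  rw [integral_withDensity_eq_integral_toReal_smul₀
    hi.aestronglyMeasurable.aemeasurable.ennreal_ofReal (by simp)]
  refine setIntegral_congr_fun hΩ.measurableSet fun x hx => ?_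
  simp only [smul_eq_mul]
  rw [ENNReal.toReal_ofReal (hφ x hx).le, mul_comm]

theorem aux_test {N : ℕ} (hN : 0 < N) (Ω : Set (EuclideanSpace ℝ (Fin N))) (hΩ : IsOpen Ω)
    (hb : IsBounded Ω) (hne : Ω.Nonempty)
    (ν : Measure (EuclideanSpace ℝ (Fin N))) [IsFiniteMeasure ν] (hν : ∀ᵐ x ∂ν, x ∈ Ω)
    (hν0 : ν univ ≠ 0) (hpos : ∀ U ⊆ Ω, IsOpen U → U.Nonempty → ν U ≠ 0) :
    ∃ w : EuclideanSpace ℝ (Fin N) → ℝ, ContDiffOn ℝ 1 w Ω ∧ MemLp w 2 ν ∧ ∫ x, w x ∂ν = 0 ∧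
      Integrable (fun x => ‖fderiv ℝ w x‖ ^ 2) ν ∧ ∫⁻ x, ENNReal.ofReal (w x ^ 2) ∂ν ≠ 0 := by
  set i : Fin N := ⟨0, hN⟩
  set P : EuclideanSpace ℝ (Fin N) →L[ℝ] ℝ := EuclideanSpace.proj i with hP
  obtain ⟨R, hR⟩ := hb.exists_norm_le
  have hVpos : 0 < ν.real univ := ENNReal.toReal_pos hν0 (measure_ne_top _ _)
  have hPm : MemLp P 2 ν := by
    refine MemLp.of_bound P.continuous.aestronglyMeasurable (‖P‖ * R) ?_
    filter_upwards [hν] with x hx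
    exact (P.le_opNorm x).trans (by gcongr; exact hR x hx)
  have hPi : Integrable P ν := hPm.integrable (by norm_num)
  set c := (∫ x, P x ∂ν) / ν.real univ with hcdef
  have hfd : ∀ x, fderiv ℝ (fun x => P x - c) x = P := by
    intro x
    rw [fderiv_sub_const]
    exact P.fderiv
  refine ⟨fun x => P x - c, by fun_prop, hPm.sub (memLp_const c), ?_, ?_, ?_⟩
  · rw [integral_sub hPi (integrable_const c), integral_const, smul_eq_mul, hcdef]
    field_simp
    ring
  · simp only [hfd]
    exact integrable_const _
  · intro h0
    rw [lintegral_eq_zero_iff (by fun_prop)] at h0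
    set U := Ω ∩ (fun x => P x - c) ⁻¹' {0}ᶜ with hU
    have hUo : IsOpen U := hΩ.inter (isOpen_compl_singleton.preimage (by fun_prop))
    have hUz : ν U = 0 := by
      refine measure_mono_null (fun x hx => ?_) (ae_iff.1 h0)
      simp only [mem_ofPred_eq, Pi.zero_apply, ENNReal.ofReal_eq_zero, not_le]
      have : P x - c ≠ 0 := hx.2
      positivity
    have hUe : ¬ U.Nonempty := fun h => hpos U inter_subset_left hUo h hUz
    have hall : ∀ x ∈ Ω, P x = c := by
      intro x hx
      by_contra hxc
      exact hUe ⟨x, hx, fun h => hxc (by simpa [sub_eq_zero] using h)⟩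
    obtain ⟨x, hx⟩ := hne
    obtain ⟨ε, hε, hball⟩ := Metric.isOpen_iff.1 hΩ x hx
    have hy : x + EuclideanSpace.single i (ε / 2) ∈ Ω := by
      apply hball
      rw [Metric.mem_ball, dist_eq_norm, add_sub_cancel_left, EuclideanSpace.norm_single,
        Real.norm_eq_abs, abs_of_pos (by positivity)]
      linarith
    have h1 := hall _ hy
    have h2 := hall x hx
    rw [map_add, h2] at h1
    have h3 : P (EuclideanSpace.single i (ε / 2)) = ε / 2 := by simp [hP]
    rw [h3] at h1
    linarith

theorem aux_fin (s : ℕ) (D μ r V U : ℝ) (hV : 0 ≤ V) (hU : 0 ≤ U) (hr : r ^ 2 = μ ^ s) :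
    4 * (4 * 2 ^ s * D ^ 2 * μ) ^ s * 16 ^ s * U / V =
      (Real.sqrt (4 * (4 * 2 ^ s) ^ s * 16 ^ s) * r * D ^ s / Real.sqrt V * Real.sqrt U) ^ 2 := by
  have h1 : (Real.sqrt (4 * (4 * 2 ^ s) ^ s * 16 ^ s) * r * D ^ s / Real.sqrt V *
      Real.sqrt U) ^ 2 = Real.sqrt (4 * (4 * 2 ^ s) ^ s * 16 ^ s) ^ 2 * r ^ 2 * (D ^ s) ^ 2 /
        Real.sqrt V ^ 2 * Real.sqrt U ^ 2 := by ring
  have h2 : (4 * 2 ^ s * D ^ 2 * μ) ^ s = (4 * 2 ^ s) ^ s * (D ^ 2) ^ s * μ ^ s := by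
    rw [mul_pow, mul_pow]
  rw [h1, h2, hr, Real.sq_sqrt (by positivity), Real.sq_sqrt hV, Real.sq_sqrt hU,
    pow_right_comm D 2 s]
  generalize (4 * 2 ^ s : ℝ) ^ s = A
  ring

/-- Proposition 6.1 / `ambu25`: there exists a positive constant `C`
depending only on `N + m` such that, for every open bounded convex domain `Ω ⊂ ℝ^N` with
diameter `D` and every positive `(1/m)`-concave weight `φ ∈ L¹(Ω)`, any first eigenfunction
`ū` of `μ₁(Ω, φ)` satisfies
`‖ū‖_{L^∞(Ω)} ≤ C μ₁(Ω,φ)^{(N+m)/2} D^{N+m} / (∫_Ω φ)^{1/2} · ‖ū‖_{L²(Ω,φ)}`. -/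
theorem linfty_bound_weighted_neumann_eigenfunction :
    ∀ (s : ℕ), ∃ C : ℝ, 0 < C ∧
      ∀ (N m : ℕ), 0 < N → 0 < m → N + m = s →
        ∀ Ω : Set (EuclideanSpace ℝ (Fin N)),
          IsOpen Ω → IsBounded Ω → Convex ℝ Ω → Ω.Nonempty →
          ∀ φ : EuclideanSpace ℝ (Fin N) → ℝ,
            (∀ x ∈ Ω, 0 < φ x) → IntegrableOn φ Ω →
            ConcaveOn ℝ Ω (fun x => φ x ^ ((1 : ℝ) / m)) →
            ∀ u : EuclideanSpace ℝ (Fin N) → ℝ,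
              wAdm Ω φ u → wRayleigh Ω φ u = wEV Ω φ →
              ∀ x ∈ Ω,
                |u x| ≤ C * (wEV Ω φ).toReal ^ (((N : ℝ) + m) / 2) *
                    Metric.diam Ω ^ (N + m) / Real.sqrt (∫ y in Ω, φ y) *
                    Real.sqrt (∫⁻ y in Ω, ENNReal.ofReal ((u y) ^ 2 * φ y)).toReal := by
  intro s
  refine ⟨Real.sqrt (4 * (4 * 2 ^ s) ^ s * 16 ^ s), by positivity, ?_⟩
  intro N m hN hm hs Ω hΩ hb hc hne φ hφ hi hconc u hadm hray x hx
  set ν := (volume.restrict Ω).withDensity (fun x => ENNReal.ofReal (φ x)) with hνdef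
  have : IsFiniteMeasure ν := isFiniteMeasure_withDensity_ofReal hi.2
  have hwm : AEMeasurable (fun x => ENNReal.ofReal (φ x)) (volume.restrict Ω) :=
    hi.aestronglyMeasurable.aemeasurable.ennreal_ofReal
  have hν : ∀ᵐ x ∂ν, x ∈ Ω :=
    (withDensity_absolutelyContinuous _ _).ae_le (ae_restrict_mem hΩ.measurableSet)
  have hpos : ∀ U ⊆ Ω, IsOpen U → U.Nonempty → ν U ≠ 0 := by
    intro U hU hUo hUn h0
    rw [hνdef, withDensity_apply_eq_zero' hwm] at h0
    have hsub : {x | ENNReal.ofReal (φ x) ≠ 0} ∩ U = U := by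
      refine inter_eq_right.2 fun y hy => ?_
      exact (ENNReal.ofReal_pos.2 (hφ y (hU hy))).ne'
    rw [hsub, Measure.restrict_apply hUo.measurableSet, inter_eq_left.2 hU] at h0
    exact hUo.measure_ne_zero volume hUn h0
  have hν0 : ν univ ≠ 0 := fun h =>
    hpos Ω subset_rfl hΩ hne (measure_mono_null (subset_univ _) h)
  have hV : ν.real univ = ∫ y in Ω, φ y := by
    have : ν univ = ENNReal.ofReal (∫ y in Ω, φ y) := by
      rw [ofReal_integral_eq_lintegral_ofReal hi
        ((ae_restrict_mem hΩ.measurableSet).mono fun y hy => (hφ y hy).le), hνdef,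
        withDensity_apply _ MeasurableSet.univ, Measure.restrict_univ]
    rw [Measure.real, this, ENNReal.toReal_ofReal]
    exact setIntegral_nonneg hΩ.measurableSet fun y hy => (hφ y hy).le
  have hVpos : 0 < ν.real univ := ENNReal.toReal_pos hν0 (measure_ne_top _ _)
  have HC := fun y hy t ht ht1 g => aux_HC (N := N) (m := m) hm Ω hΩ hc φ hφ hi hconc y hy t ht ht1 g
  rw [← hνdef, hs] at HC
  have hD : ∀ x ∈ Ω, ∀ y ∈ Ω, dist x y ≤ Metric.diam Ω := fun x hx y hy =>
    Metric.dist_le_diam_of_mem hb hx hy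
  have cq : ∀ w : EuclideanSpace ℝ (Fin N) → ℝ,
      ∫⁻ x in Ω, ENNReal.ofReal (w x ^ 2 * φ x) = ∫⁻ x, ENNReal.ofReal (w x ^ 2) ∂ν := fun w =>
    aux_conv Ω φ hi (fun x => w x ^ 2) fun x => sq_nonneg _
  have cg : ∀ w : EuclideanSpace ℝ (Fin N) → ℝ,
      ∫⁻ x in Ω, ENNReal.ofReal (‖fderiv ℝ w x‖ ^ 2 * φ x) =
        ∫⁻ x, ENNReal.ofReal (‖fderiv ℝ w x‖ ^ 2) ∂ν := fun w =>
    aux_conv Ω φ hi (fun x => ‖fderiv ℝ w x‖ ^ 2) fun x => sq_nonneg _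
  have cm : ∀ w : EuclideanSpace ℝ (Fin N) → ℝ, ∫ x in Ω, w x * φ x = ∫ x, w x ∂ν :=
    aux_conv_int Ω hΩ φ hφ hi
  -- a lower bound valid for all admissible functions
  have key : ∀ w : EuclideanSpace ℝ (Fin N) → ℝ, ContDiffOn ℝ 1 w Ω → MemLp w 2 ν →
      ∫ x, w x ∂ν = 0 → ∫⁻ x, ENNReal.ofReal (w x ^ 2) ∂ν ≠ 0 →
      wEV Ω φ ≤ (∫⁻ x, ENNReal.ofReal (‖fderiv ℝ w x‖ ^ 2) ∂ν) /
        ∫⁻ x, ENNReal.ofReal (w x ^ 2) ∂ν := by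
    intro w hw hw2 hw0 hwn
    have hadmw : wAdm Ω φ w := by
      refine ⟨hw, ?_, ?_, ?_⟩
      · rw [cq]; exact hwn
      · rw [cq, ← ofReal_integral_eq_lintegral_ofReal hw2.integrable_sq
          (ae_of_all _ fun x => sq_nonneg _)]
        exact ENNReal.ofReal_ne_top
      · rw [cm]; exact hw0
    have h : wEV Ω φ ≤ wRayleigh Ω φ w := iInf₂_le (f := fun (v : EuclideanSpace ℝ (Fin N) → ℝ) (_ : wAdm Ω φ v) =>
      wRayleigh Ω φ v) w hadmw
    unfold wRayleigh at h
    rw [cg w, cq w] at h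
    exact h
  have hfin : wEV Ω φ ≠ ∞ := by
    obtain ⟨w, hw, hw2, hw0, hwE, hwn⟩ := aux_test hN Ω hΩ hb hne ν hν hν0 hpos
    refine ((key w hw hw2 hw0 hwn).trans_lt (ENNReal.div_lt_top ?_ hwn)).ne
    rw [← ofReal_integral_eq_lintegral_ofReal hwE (ae_of_all _ fun x => sq_nonneg _)]
    exact ENNReal.ofReal_ne_top
  set μ := (wEV Ω φ).toReal with hμdef
  have hμo : ENNReal.ofReal μ = wEV Ω φ := ENNReal.ofReal_toReal hfin
  have hμ0 : 0 ≤ μ := ENNReal.toReal_nonneg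
  have Hmin : ∀ w : EuclideanSpace ℝ (Fin N) → ℝ, ContDiffOn ℝ 1 w Ω → MemLp w 2 ν →
      ∫ x, w x ∂ν = 0 → Integrable (fun x => ‖fderiv ℝ w x‖ ^ 2) ν →
      μ * ∫ x, w x ^ 2 ∂ν ≤ ∫ x, ‖fderiv ℝ w x‖ ^ 2 ∂ν := by
    intro w hw hw2 hw0 hwE
    have hq := ofReal_integral_eq_lintegral_ofReal hw2.integrable_sq
      (ae_of_all _ fun x => sq_nonneg (w x))
    have hg := ofReal_integral_eq_lintegral_ofReal hwE
      (ae_of_all _ fun x => sq_nonneg ‖fderiv ℝ w x‖)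
    have hgn : 0 ≤ ∫ x, ‖fderiv ℝ w x‖ ^ 2 ∂ν := integral_nonneg fun x => sq_nonneg _
    by_cases hwn : ∫⁻ x, ENNReal.ofReal (w x ^ 2) ∂ν = 0
    · rw [← hq, ENNReal.ofReal_eq_zero] at hwn
      nlinarith
    · have h := key w hw hw2 hw0 hwn
      rw [ENNReal.le_div_iff_mul_le (Or.inl hwn) (Or.inl (hq ▸ ENNReal.ofReal_ne_top)),
        ← hq, ← hg, ← hμo, ← ENNReal.ofReal_mul hμ0, ENNReal.ofReal_le_ofReal_iff hgn] at h
      exact h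
  obtain ⟨hu, hun, hut, hu0⟩ := hadm
  unfold wRayleigh at hray
  rw [cq u] at hun hut
  rw [cg u, cq u] at hray
  rw [cm] at hu0
  rw [cq u]
  have hum : AEMeasurable u ν := aux_aem Ω hΩ ν hν u hu.continuousOn
  have hui2 : Integrable (fun x => u x ^ 2) ν := by
    refine ⟨(hum.pow_const 2).aestronglyMeasurable, ?_⟩
    rw [hasFiniteIntegral_iff_ofReal (ae_of_all _ fun x => sq_nonneg _)]
    exact hut.lt_top
  have hu2 : MemLp u 2 ν := (memLp_two_iff_integrable_sq hum.aestronglyMeasurable).2 hui2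
  have hEeq : ∫⁻ x, ENNReal.ofReal (‖fderiv ℝ u x‖ ^ 2) ∂ν =
      wEV Ω φ * ∫⁻ x, ENNReal.ofReal (u x ^ 2) ∂ν := by
    rw [← hray, ENNReal.div_mul_cancel hun hut]
  have hE : Integrable (fun x => ‖fderiv ℝ u x‖ ^ 2) ν := by
    refine ⟨((measurable_fderiv ℝ u).norm.pow_const 2).aestronglyMeasurable, ?_⟩
    rw [hasFiniteIntegral_iff_ofReal (ae_of_all _ fun x => sq_nonneg _), hEeq]
    exact ENNReal.mul_lt_top hfin.lt_top hut.lt_top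
  have hq := ofReal_integral_eq_lintegral_ofReal hui2 (ae_of_all _ fun x => sq_nonneg (u x))
  have hg := ofReal_integral_eq_lintegral_ofReal hE
      (ae_of_all _ fun x => sq_nonneg ‖fderiv ℝ u x‖)
  have hqn : 0 ≤ ∫ x, u x ^ 2 ∂ν := integral_nonneg fun x => sq_nonneg _
  have hgn : 0 ≤ ∫ x, ‖fderiv ℝ u x‖ ^ 2 ∂ν := integral_nonneg fun x => sq_nonneg _
  have Heq : ∫ x, ‖fderiv ℝ u x‖ ^ 2 ∂ν = μ * ∫ x, u x ^ 2 ∂ν := by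
    rw [← hq, ← hg, ← hμo, ← ENNReal.ofReal_mul hμ0,
      ENNReal.ofReal_eq_ofReal_iff hgn (by positivity)] at hEeq
    exact hEeq
  have hqpos : 0 < ∫ x, u x ^ 2 ∂ν := by
    rw [← hq] at hun
    exact ENNReal.ofReal_pos.1 (pos_iff_ne_zero.2 hun)
  have hμ : 1 ≤ 2 ^ s * Metric.diam Ω ^ 2 * μ := by
    have h := aux_poincare Ω hΩ hc (Metric.diam Ω) hD ν hν hν0 HC u hu
      (hu2.integrable (by norm_num)) hu0
    have e1 : ∀ x, ‖u x‖ₑ ^ 2 = ENNReal.ofReal (u x ^ 2) := fun x => by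
      rw [← ofReal_norm, ← ENNReal.ofReal_pow (norm_nonneg _), Real.norm_eq_abs, sq_abs]
    have e2 : ∀ x, ‖fderiv ℝ u x‖ₑ ^ 2 = ENNReal.ofReal (‖fderiv ℝ u x‖ ^ 2) := fun x => by
      rw [← ofReal_norm, ← ENNReal.ofReal_pow (norm_nonneg _)]
    simp only [e1, e2] at h
    rw [← hq, ← hg, ← ENNReal.ofReal_mul (by positivity),
      ENNReal.ofReal_le_ofReal_iff (by positivity), Heq] at h
    by_contra! hlt
    nlinarith
  have hsq : u x ^ 2 ≤ 4 * (4 * 2 ^ s * Metric.diam Ω ^ 2 * μ) ^ s * 16 ^ s *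
      (∫ x, u x ^ 2 ∂ν) / ν.real univ := by
    rcases lt_trichotomy (u x) 0 with hneg | hzero | hp
    · have hfn : ∀ y, ‖fderiv ℝ (fun x => - u x) y‖ = ‖fderiv ℝ u y‖ := fun y => by
        rw [fderiv_fun_neg, norm_neg]
      have h := aux_sup Ω hΩ hc (Metric.diam Ω) hD ν hν hν0 hpos HC μ hμ0 hμ (fun x => - u x)
        hu.neg hu2.neg (by rw [integral_neg, hu0, neg_zero]) (by simpa only [hfn] using hE)
        (by simpa only [hfn, neg_sq] using Heq) Hmin x hx (by linarith)
      simpa only [neg_sq] using h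
    · rw [hzero, zero_pow (by norm_num)]
      positivity
    · exact aux_sup Ω hΩ hc (Metric.diam Ω) hD ν hν hν0 hpos HC μ hμ0 hμ u hu hu2 hu0 hE Heq Hmin
        x hx hp
  rw [← hq, ENNReal.toReal_ofReal hqn, ← hV, hs]
  have hdn : 0 ≤ Metric.diam Ω := Metric.diam_nonneg
  refine abs_le_of_sq_le_sq (hsq.trans (le_of_eq ?_)) (by positivity)
  have hrp : (μ ^ (((N : ℝ) + m) / 2)) ^ 2 = μ ^ s := by
    rw [← Real.rpow_natCast (μ ^ (((N : ℝ) + m) / 2)) 2, ← Real.rpow_mul hμ0,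
      ← Real.rpow_natCast μ s, ← hs]
    congr 1
    push_cast
    ring
  exact aux_fin s _ _ _ _ _ hVpos.le hqn hrp
end
end

section
/- Let Ω be an open bounded convex domain in ℝ^N with first two Dirichlet Laplacian eigenvalues λ₁(Ω), λ₂(Ω) and L²-normalized eigenfunctions u₁, u₂. Then μ₁(Ω, u₁²) = λ₂(Ω) − λ₁(Ω), and an eigenfunction for μ₁(Ω, u₁²) is given by ū := u₂/u₁. -/
open MeasureTheory Real Set Filter Bornology
open scoped ENNReal RealInnerProductSpace

noncomputable section

section Helpers

open Topology InnerProductSpace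

variable {N : ℕ}

theorem grad_norm (w : EuclideanSpace ℝ (Fin N) → ℝ) (x : EuclideanSpace ℝ (Fin N)) :
    ‖gradient w x‖ = ‖fderiv ℝ w x‖ := by
  simp [gradient]

theorem grad_mul {v w : EuclideanSpace ℝ (Fin N) → ℝ} {x : EuclideanSpace ℝ (Fin N)}
    (hv : DifferentiableAt ℝ v x) (hw : DifferentiableAt ℝ w x) :
    gradient (fun y => v y * w y) x = v x • gradient w x + w x • gradient v x := by
  unfold gradient
  rw [fderiv_fun_mul hv hw]; simp

theorem grad_comp {h : ℝ → ℝ} {h' : ℝ} {w : EuclideanSpace ℝ (Fin N) → ℝ}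
    {x : EuclideanSpace ℝ (Fin N)}
    (hh : HasDerivAt h h' (w x)) (hw : DifferentiableAt ℝ w x) :
    gradient (fun y => h (w y)) x = h' • gradient w x := by
  unfold gradient
  have := (hh.comp_hasFDerivAt x hw.hasFDerivAt).fderiv
  have h2 : fderiv ℝ (fun y => h (w y)) x = h' • fderiv ℝ w x := this
  rw [h2]; simp

theorem grad_lin {v w : EuclideanSpace ℝ (Fin N) → ℝ} {x : EuclideanSpace ℝ (Fin N)} (a b : ℝ)
    (hv : DifferentiableAt ℝ v x) (hw : DifferentiableAt ℝ w x) :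
    gradient (fun y => a * v y + b * w y) x = a • gradient v x + b • gradient w x := by
  unfold gradient
  rw [fderiv_fun_add (hv.const_mul a) (hw.const_mul b), fderiv_const_mul hv, fderiv_const_mul hw]
  simp

/-- cutoff derivative -/
def theta (ε t : ℝ) : ℝ := max 0 (min 1 (|t| / ε - 1))

/-- cutoff function -/
def eta (ε s : ℝ) : ℝ := ∫ t in (0:ℝ)..s, theta ε t

theorem theta_cont (ε : ℝ) : Continuous (theta ε) := by
  unfold theta; fun_prop

theorem theta_nonneg (ε t : ℝ) : 0 ≤ theta ε t := le_max_left _ _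

theorem theta_le (ε t : ℝ) : theta ε t ≤ 1 := by
  unfold theta; simp

theorem theta_zero {ε t : ℝ} (hε : 0 < ε) (h : |t| ≤ ε) : theta ε t = 0 := by
  unfold theta
  apply max_eq_left
  apply (min_le_right _ _).trans
  have : |t| / ε ≤ 1 := (div_le_one hε).2 h
  linarith

theorem theta_one {ε t : ℝ} (hε : 0 < ε) (h : 2 * ε ≤ |t|) : theta ε t = 1 := by
  unfold theta
  have : 2 ≤ |t| / ε := (le_div_iff₀ hε).2 h
  rw [min_eq_left (by linarith)]; simp

theorem eta_deriv (ε s : ℝ) : HasDerivAt (eta ε) (theta ε s) s :=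
  (theta_cont ε).integral_hasStrictDerivAt 0 s |>.hasDerivAt

theorem eta_contDiff (ε : ℝ) : ContDiff ℝ 1 (eta ε) := by
  rw [contDiff_one_iff_deriv]
  refine ⟨fun s => (eta_deriv ε s).differentiableAt, ?_⟩
  have : deriv (eta ε) = theta ε := funext fun s => (eta_deriv ε s).deriv
  rw [this]; exact theta_cont ε

theorem eta_zero {ε s : ℝ} (hε : 0 < ε) (h : |s| ≤ ε) : eta ε s = 0 := by
  unfold eta
  apply intervalIntegral.integral_zero_ae
  refine Eventually.of_forall fun t ht => theta_zero hε (le_trans ?_ h)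
  have := Set.abs_sub_left_of_mem_uIcc (Set.uIoc_subset_uIcc ht)
  simpa using this

theorem eta_sub {ε s : ℝ} (hε : 0 < ε) : |eta ε s - s| ≤ 2 * ε := by
  -- the derivative of `eta - id` lies in `[-1,0]` and vanishes beyond `2ε`
  have key : eta ε s - s = ∫ t in (0:ℝ)..s, (theta ε t - 1) := by
    rw [intervalIntegral.integral_sub ((theta_cont ε).intervalIntegrable _ _) (by simp)]
    simp [eta]
  have hb : ∀ t, |theta ε t - 1| ≤ 1 := fun t => by
    rw [abs_le]; constructor <;> linarith [theta_nonneg ε t, theta_le ε t]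
  have hint : ∀ a b : ℝ, IntervalIntegrable (fun t => theta ε t - 1) volume a b := fun a b =>
    ((theta_cont ε).sub continuous_const).intervalIntegrable _ _
  rw [key]
  by_cases hs : |s| ≤ 2 * ε
  · have := intervalIntegral.norm_integral_le_of_norm_le_const (a := (0:ℝ)) (b := s)
      (f := fun t => theta ε t - 1) (C := 1) (fun t _ => hb t)
    simp only [Real.norm_eq_abs, sub_zero, one_mul] at this
    exact this.trans hs
  · push Not at hs
    have aux : ∀ c : ℝ, |c| = 2 * ε → (∫ t in c..s, (theta ε t - 1)) = 0 →
        |∫ t in (0:ℝ)..s, (theta ε t - 1)| ≤ 2 * ε := by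
      intro c hc h0
      rw [← intervalIntegral.integral_add_adjacent_intervals (hint 0 c) (hint c s), h0, add_zero]
      have := intervalIntegral.norm_integral_le_of_norm_le_const (a := (0:ℝ)) (b := c)
        (f := fun t => theta ε t - 1) (C := 1) (fun t _ => hb t)
      simp only [Real.norm_eq_abs, sub_zero, one_mul] at this
      exact this.trans hc.le
    rcases le_total 0 s with h | h
    · rw [abs_of_nonneg h] at hs
      refine aux (2 * ε) (abs_of_pos (by linarith)) ?_
      apply intervalIntegral.integral_zero_ae
      refine Eventually.of_forall fun t ht => ?_
      rw [Set.uIoc_of_le hs.le] at ht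
      rw [theta_one hε (ht.1.le.trans (le_abs_self t)), sub_self]
    · rw [abs_of_nonpos h] at hs
      refine aux (-(2 * ε)) (by rw [abs_neg]; exact abs_of_pos (by linarith)) ?_
      apply intervalIntegral.integral_zero_ae
      refine Eventually.of_forall fun t ht => ?_
      rw [Set.uIoc_of_ge (by linarith)] at ht
      rw [theta_one hε (by have := neg_le_abs t; linarith [ht.2]), sub_self]

/-- The avatar of `H¹₀(Ω)` used in the frozen definitions. -/
structure InX (Ω : Set (EuclideanSpace ℝ (Fin N))) (w : EuclideanSpace ℝ (Fin N) → ℝ) : Prop where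
  cont : Continuous w
  zero : ∀ x ∉ Ω, w x = 0
  cd : ContDiffOn ℝ 1 w Ω
  mem : MemLp (gradient w) 2 (volume.restrict Ω)

variable {Ω : Set (EuclideanSpace ℝ (Fin N))}

theorem cd_diff (hΩ : IsOpen Ω) {w : EuclideanSpace ℝ (Fin N) → ℝ} (h : ContDiffOn ℝ 1 w Ω)
    {x : EuclideanSpace ℝ (Fin N)} (hx : x ∈ Ω) : DifferentiableAt ℝ w x :=
  (h.differentiableOn (by simp)).differentiableAt (hΩ.mem_nhds hx)

theorem cd_grad_cont (hΩ : IsOpen Ω) {w : EuclideanSpace ℝ (Fin N) → ℝ} (h : ContDiffOn ℝ 1 w Ω) :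
    ContinuousOn (gradient w) Ω :=
  (LinearIsometryEquiv.continuous _).comp_continuousOn (h.continuousOn_fderiv_of_isOpen hΩ (by simp))

theorem cd_grad_meas (hΩ : IsOpen Ω) {w : EuclideanSpace ℝ (Fin N) → ℝ} (h : ContDiffOn ℝ 1 w Ω) :
    AEStronglyMeasurable (gradient w) (volume.restrict Ω) :=
  (cd_grad_cont hΩ h).aestronglyMeasurable hΩ.measurableSet

theorem cd_meas (hΩ : IsOpen Ω) {w : EuclideanSpace ℝ (Fin N) → ℝ} (h : ContDiffOn ℝ 1 w Ω) :
    AEStronglyMeasurable w (volume.restrict Ω) :=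
  h.continuousOn.aestronglyMeasurable hΩ.measurableSet

theorem InX.compact (hb : IsBounded Ω) {w : EuclideanSpace ℝ (Fin N) → ℝ} (h : InX Ω w) :
    HasCompactSupport w := by
  refine HasCompactSupport.intro hb.isCompact_closure fun x hx => h.zero x fun h' => hx (subset_closure h')

theorem InX.memLp (hb : IsBounded Ω) {w : EuclideanSpace ℝ (Fin N) → ℝ} (h : InX Ω w) :
    MemLp w 2 (volume.restrict Ω) :=
  h.cont.memLp_of_hasCompactSupport (h.compact hb)

theorem InX.of_lintegral (hΩ : IsOpen Ω) {w : EuclideanSpace ℝ (Fin N) → ℝ}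
    (h1 : Continuous w) (h2 : ∀ x ∉ Ω, w x = 0) (h3 : ContDiffOn ℝ 1 w Ω)
    (h4 : (∫⁻ x in Ω, ENNReal.ofReal (‖fderiv ℝ w x‖ ^ 2)) ≠ ∞) : InX Ω w := by
  refine ⟨h1, h2, h3, ?_⟩
  rw [memLp_two_iff_integrable_sq_norm (cd_grad_meas hΩ h3)]
  refine ⟨(cd_grad_meas hΩ h3).norm.pow 2, ?_⟩
  rw [hasFiniteIntegral_iff_ofReal (Eventually.of_forall fun x => by positivity)]
  simp only [grad_norm]
  exact h4.lt_top

theorem InX.lin (hΩ : IsOpen Ω) {v w : EuclideanSpace ℝ (Fin N) → ℝ} (a b : ℝ)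
    (hv : InX Ω v) (hw : InX Ω w) : InX Ω (fun y => a * v y + b * w y) := by
  refine ⟨by have := hv.cont; have := hw.cont; fun_prop, fun x hx => by simp [hv.zero x hx, hw.zero x hx],
    (contDiffOn_const.mul hv.cd).add (contDiffOn_const.mul hw.cd), ?_⟩
  refine MemLp.ae_eq ?_ ((hv.mem.const_smul a).add (hw.mem.const_smul b))
  filter_upwards [ae_restrict_mem hΩ.measurableSet] with x hx
  rw [grad_lin a b (cd_diff hΩ hv.cd hx) (cd_diff hΩ hw.cd hx)]; simp

theorem InX.mul (hΩ : IsOpen Ω) {v w : EuclideanSpace ℝ (Fin N) → ℝ} {M : ℝ}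
    (hv : ContDiffOn ℝ 1 v Ω) (hM : ∀ x ∈ Ω, |v x| ≤ M) (hw : InX Ω w)
    (hg : MemLp (fun x => w x • gradient v x) 2 (volume.restrict Ω)) :
    InX Ω (fun y => v y * w y) := by
  have hz : ∀ x ∉ Ω, v x * w x = 0 := fun x hx => by simp [hw.zero x hx]
  refine ⟨?_, hz, hv.mul hw.cd, ?_⟩
  · rw [continuous_iff_continuousAt]
    intro x
    by_cases hx : x ∈ Ω
    · exact ((hv.continuousOn x hx).continuousAt (hΩ.mem_nhds hx)).mul hw.cont.continuousAt
    · change Tendsto (fun y => v y * w y) (𝓝 x) (𝓝 (v x * w x))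
      rw [hz x hx]
      apply squeeze_zero_norm (a := fun y => |M| * |w y|)
      · intro y
        by_cases hy : y ∈ Ω
        · rw [norm_mul]
          exact mul_le_mul_of_nonneg_right ((hM y hy).trans (le_abs_self M)) (abs_nonneg _)
        · rw [hz y hy]; simp; positivity
      · have : Continuous fun y => |M| * |w y| := by have := hw.cont; fun_prop
        have h := this.tendsto x
        simpa [hw.zero x hx] using h
  · have h1 : MemLp (fun x => v x • gradient w x) 2 (volume.restrict Ω) := by
      refine hw.mem.of_le_mul (c := M) ((cd_meas hΩ hv).smul hw.mem.1) ?_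
      filter_upwards [ae_restrict_mem hΩ.measurableSet] with x hx
      rw [norm_smul]
      exact mul_le_mul_of_nonneg_right (hM x hx) (norm_nonneg _)
    refine MemLp.ae_eq ?_ (h1.add hg)
    filter_upwards [ae_restrict_mem hΩ.measurableSet] with x hx
    rw [grad_mul (cd_diff hΩ hv hx) (cd_diff hΩ hw.cd hx)]; simp

/-- Truncation of an element of the avatar of `H¹₀`. -/
theorem trunc_grad (hΩ : IsOpen Ω) {w : EuclideanSpace ℝ (Fin N) → ℝ} (hw : ContDiffOn ℝ 1 w Ω)
    (ε : ℝ) {x : EuclideanSpace ℝ (Fin N)} (hx : x ∈ Ω) :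
    gradient (fun y => eta ε (w y)) x = theta ε (w x) • gradient w x :=
  grad_comp (eta_deriv ε (w x)) (cd_diff hΩ hw hx)

theorem trunc_tsupport {w : EuclideanSpace ℝ (Fin N) → ℝ} (hw : InX Ω w)
    {ε : ℝ} (hε : 0 < ε) : tsupport (fun y => eta ε (w y)) ⊆ Ω := by
  have hc : IsClosed {x | ε ≤ |w x|} := isClosed_le continuous_const hw.cont.abs
  have h1 : tsupport (fun y => eta ε (w y)) ⊆ {x | ε ≤ |w x|} := by
    apply closure_minimal _ hc
    intro x hx
    by_contra hlt
    simp only [mem_ofPred_eq, not_le] at hlt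
    exact hx (eta_zero hε hlt.le)
  intro x hx
  by_contra hn
  have := h1 hx
  simp only [mem_ofPred_eq, hw.zero x hn, abs_zero] at this
  linarith

theorem contDiff_of_tsupport (hΩ : IsOpen Ω) {w : EuclideanSpace ℝ (Fin N) → ℝ}
    (hw : ContDiffOn ℝ 1 w Ω) (hs : tsupport w ⊆ Ω) : ContDiff ℝ 1 w := by
  rw [contDiff_iff_contDiffAt]
  intro x
  by_cases hx : x ∈ Ω
  · exact hw.contDiffAt (hΩ.mem_nhds hx)
  · have : x ∉ tsupport w := fun h => hx (hs h)
    have h0 : w =ᶠ[𝓝 x] fun _ => 0 := 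
      notMem_tsupport_iff_eventuallyEq.1 this
    exact contDiffAt_const.congr_of_eventuallyEq h0

theorem InX.trunc (hΩ : IsOpen Ω) {w : EuclideanSpace ℝ (Fin N) → ℝ} (hw : InX Ω w)
    {ε : ℝ} (hε : 0 < ε) : InX Ω (fun y => eta ε (w y)) := by
  refine ⟨(eta_contDiff ε).continuous.comp hw.cont, fun x hx => ?_,
    (eta_contDiff ε).comp_contDiffOn hw.cd, ?_⟩
  · rw [hw.zero x hx]; exact eta_zero hε (by simpa using hε.le)
  · refine hw.mem.of_le (cd_grad_meas hΩ ((eta_contDiff ε).comp_contDiffOn hw.cd)) ?_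
    filter_upwards [ae_restrict_mem hΩ.measurableSet] with x hx
    have := trunc_grad hΩ hw.cd ε hx
    change ‖gradient (fun y => eta ε (w y)) x‖ ≤ _
    rw [this, norm_smul, Real.norm_eq_abs, abs_of_nonneg (theta_nonneg _ _)]
    exact mul_le_of_le_one_left (norm_nonneg _) (theta_le _ _)

theorem trunc_contDiff (hΩ : IsOpen Ω) {w : EuclideanSpace ℝ (Fin N) → ℝ} (hw : InX Ω w)
    {ε : ℝ} (hε : 0 < ε) : ContDiff ℝ 1 (fun y => eta ε (w y)) :=
  contDiff_of_tsupport hΩ (hw.trunc hΩ hε).cd (trunc_tsupport hw hε)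

/-- The gradient vanishes almost everywhere on the zero set. -/
theorem grad_zero_ae (hN : 0 < N) (hΩ : IsOpen Ω) {w : EuclideanSpace ℝ (Fin N) → ℝ}
    (hw : InX Ω w) : ∀ᵐ x ∂(volume.restrict Ω), w x = 0 → gradient w x = 0 := by
  set e : EuclideanSpace ℝ (Fin N) := EuclideanSpace.single ⟨0, hN⟩ 1 with he
  have hene : e ≠ 0 := by
    intro h
    have : ‖e‖ = 1 := by simp [he]
    rw [h] at this; simp at this
  set s : Set (EuclideanSpace ℝ (Fin N)) := Ω ∩ {x | w x = 0} with hs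
  have hsm : MeasurableSet s :=
    hΩ.measurableSet.inter (isClosed_eq hw.cont continuous_const).measurableSet
  have happ : ApproximatesLinearOn (fun x => w x • e)
      (0 : EuclideanSpace ℝ (Fin N) →L[ℝ] EuclideanSpace ℝ (Fin N)) s 0 := by
    intro x hx y hy
    have hx0 : w x = 0 := hx.2
    have hy0 : w y = 0 := hy.2
    simp [hx0, hy0]
  have := happ.norm_fderiv_sub_le volume hsm (fun x => (fderiv ℝ w x).smulRight e)
    (fun x hx => ((cd_diff hΩ hw.cd hx.1).hasFDerivAt.smul_const e).hasFDerivWithinAt)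
  rw [ae_restrict_iff' hsm] at this
  rw [ae_restrict_iff' hΩ.measurableSet]
  filter_upwards [this] with x hx hxΩ hx0
  have h := hx ⟨hxΩ, hx0⟩
  simp only [sub_zero, nonpos_iff_eq_zero, nnnorm_eq_zero] at h
  have h2 : fderiv ℝ w x = 0 := by
    ext y
    have := congrArg (fun L => L y) h
    simpa [hene] using this
  simp [gradient, h2]

theorem eta_le (ε s : ℝ) : |eta ε s| ≤ |s| := by
  have := intervalIntegral.norm_integral_le_of_norm_le_const (a := (0:ℝ)) (b := s)
    (f := theta ε) (C := 1) (fun t _ => by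
      rw [Real.norm_eq_abs, abs_of_nonneg (theta_nonneg _ _)]; exact theta_le _ _)
  simpa [eta] using this

/-- The bilinear form `∫ ∇v·∇w - c v w`. -/
def Qf (Ω : Set (EuclideanSpace ℝ (Fin N))) (c : ℝ) (v w : EuclideanSpace ℝ (Fin N) → ℝ) : ℝ :=
  ∫ x in Ω, (inner ℝ (gradient v x) (gradient w x) - c * (v x * w x))

theorem int_inner {f g : EuclideanSpace ℝ (Fin N) → EuclideanSpace ℝ (Fin N)}
    (hf : MemLp f 2 (volume.restrict Ω)) (hg : MemLp g 2 (volume.restrict Ω)) :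
    Integrable (fun x => (inner ℝ (f x) (g x) : ℝ)) (volume.restrict Ω) := by
  have h := hf.norm.integrable_mul hg.norm
  refine h.mono (hf.1.inner hg.1) (Eventually.of_forall fun x => ?_)
  simpa using abs_real_inner_le_norm (f x) (g x)

theorem InX.int_mul (hb : IsBounded Ω) {v w : EuclideanSpace ℝ (Fin N) → ℝ}
    (hv : InX Ω v) (hw : InX Ω w) : Integrable (fun x => v x * w x) (volume.restrict Ω) :=
  (hv.memLp hb).integrable_mul (hw.memLp hb)

theorem InX.int_Q (hb : IsBounded Ω) {v w : EuclideanSpace ℝ (Fin N) → ℝ} (c : ℝ)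
    (hv : InX Ω v) (hw : InX Ω w) :
    Integrable (fun x => (inner ℝ (gradient v x) (gradient w x) - c * (v x * w x) : ℝ))
      (volume.restrict Ω) :=
  (int_inner hv.mem hw.mem).sub ((hv.int_mul hb hw).const_mul c)

theorem Qf_lin (hΩ : IsOpen Ω) (hb : IsBounded Ω) {v w : EuclideanSpace ℝ (Fin N) → ℝ} (c a b : ℝ)
    (hv : InX Ω v) (hw : InX Ω w) :
    Qf Ω c (fun y => a * v y + b * w y) (fun y => a * v y + b * w y) =
      a ^ 2 * Qf Ω c v v + 2 * a * b * Qf Ω c v w + b ^ 2 * Qf Ω c w w := by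
  have i1 := (hv.int_Q hb c hv).const_mul (a ^ 2)
  have i2 := (hv.int_Q hb c hw).const_mul (2 * a * b)
  have i3 := (hw.int_Q hb c hw).const_mul (b ^ 2)
  have i12 : Integrable (fun x => a ^ 2 * (inner ℝ (gradient v x) (gradient v x) - c * (v x * v x)) +
      2 * a * b * (inner ℝ (gradient v x) (gradient w x) - c * (v x * w x))) (volume.restrict Ω) :=
    i1.add i2
  unfold Qf
  rw [← integral_const_mul, ← integral_const_mul, ← integral_const_mul, ← integral_add i1 i2,
    ← integral_add i12 i3]
  refine setIntegral_congr_fun hΩ.measurableSet fun x hx => ?_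
  simp only
  rw [grad_lin a b (cd_diff hΩ hv.cd hx) (cd_diff hΩ hw.cd hx)]
  simp only [inner_add_left, inner_add_right, inner_smul_left, inner_smul_right, conj_trivial,
    real_inner_comm (gradient v x) (gradient w x)]
  ring

theorem Qf_shift (hb : IsBounded Ω) {v w : EuclideanSpace ℝ (Fin N) → ℝ} (c d : ℝ)
    (hv : InX Ω v) (hw : InX Ω w) :
    Qf Ω c v w = Qf Ω d v w + (d - c) * ∫ x in Ω, v x * w x := by
  unfold Qf
  rw [← integral_const_mul, ← integral_add (hv.int_Q hb d hw) ((hv.int_mul hb hw).const_mul _)]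
  congr 1; ext x; ring

/-- The truncation sequence. -/
def Tr (n : ℕ) (w : EuclideanSpace ℝ (Fin N) → ℝ) : EuclideanSpace ℝ (Fin N) → ℝ :=
  fun y => eta (1 / ((n : ℝ) + 1)) (w y)

theorem eps_pos (n : ℕ) : (0 : ℝ) < 1 / ((n : ℝ) + 1) := by positivity

theorem Tr_inX (hΩ : IsOpen Ω) {w : EuclideanSpace ℝ (Fin N) → ℝ} (hw : InX Ω w) (n : ℕ) :
    InX Ω (Tr n w) := hw.trunc hΩ (eps_pos n)

theorem Tr_tendsto (w : EuclideanSpace ℝ (Fin N) → ℝ) (x : EuclideanSpace ℝ (Fin N)) :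
    Tendsto (fun n => Tr n w x) atTop (𝓝 (w x)) := by
  rw [tendsto_iff_norm_sub_tendsto_zero]
  have h := (tendsto_one_div_add_atTop_nhds_zero_nat (𝕜 := ℝ)).const_mul 2
  rw [mul_zero] at h
  exact squeeze_zero (fun n => norm_nonneg _) (fun n => eta_sub (eps_pos n)) h

theorem Tr_grad_tendsto (hΩ : IsOpen Ω) {w : EuclideanSpace ℝ (Fin N) → ℝ} (hw : InX Ω w)
    {x : EuclideanSpace ℝ (Fin N)} (hx : x ∈ Ω) (h0 : w x = 0 → gradient w x = 0) :
    Tendsto (fun n => gradient (Tr n w) x) atTop (𝓝 (gradient w x)) := by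
  have hg : ∀ n, gradient (Tr n w) x = theta (1 / ((n : ℝ) + 1)) (w x) • gradient w x := fun n =>
    trunc_grad hΩ hw.cd _ hx
  simp only [hg]
  by_cases hz : w x = 0
  · simp [h0 hz]
  · have h := (tendsto_one_div_add_atTop_nhds_zero_nat (𝕜 := ℝ)).const_mul 2
    rw [mul_zero] at h
    have hev := h.eventually_lt_const (abs_pos.2 hz)
    refine tendsto_const_nhds.congr' ?_
    filter_upwards [hev] with n hn
    rw [theta_one (eps_pos n) hn.le, one_smul]

theorem Tr_grad_le (hΩ : IsOpen Ω) {w : EuclideanSpace ℝ (Fin N) → ℝ} (hw : InX Ω w)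
    {x : EuclideanSpace ℝ (Fin N)} (hx : x ∈ Ω) (n : ℕ) :
    ‖gradient (Tr n w) x‖ ≤ ‖gradient w x‖ := by
  have hg : gradient (Tr n w) x = theta (1 / ((n : ℝ) + 1)) (w x) • gradient w x :=
    trunc_grad hΩ hw.cd _ hx
  rw [hg, norm_smul, Real.norm_eq_abs, abs_of_nonneg (theta_nonneg _ _)]
  exact mul_le_of_le_one_left (norm_nonneg _) (theta_le _ _)

theorem Qf_tendsto (hN : 0 < N) (hΩ : IsOpen Ω) (hb : IsBounded Ω)
    {v w : EuclideanSpace ℝ (Fin N) → ℝ} (c : ℝ) (hv : InX Ω v) (hw : InX Ω w) :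
    Tendsto (fun n => Qf Ω c (Tr n v) (Tr n w)) atTop (𝓝 (Qf Ω c v w)) := by
  unfold Qf
  refine tendsto_integral_of_dominated_convergence
    (fun x => ‖gradient v x‖ * ‖gradient w x‖ + |c| * (‖v x‖ * ‖w x‖)) ?_ ?_ ?_ ?_
  · exact fun n => ((Tr_inX hΩ hv n).int_Q hb c (Tr_inX hΩ hw n)).1
  · exact (hv.mem.norm.integrable_mul hw.mem.norm).add
      (((hv.memLp hb).norm.integrable_mul (hw.memLp hb).norm).const_mul _)
  · intro n
    filter_upwards [ae_restrict_mem hΩ.measurableSet] with x hx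
    refine (norm_sub_le _ _).trans (add_le_add ?_ ?_)
    · refine (abs_real_inner_le_norm _ _).trans ?_
      exact mul_le_mul (Tr_grad_le hΩ hv hx n) (Tr_grad_le hΩ hw hx n) (norm_nonneg _) (norm_nonneg _)
    · rw [norm_mul, norm_mul]
      exact mul_le_mul_of_nonneg_left
        (mul_le_mul (eta_le _ _) (eta_le _ _) (norm_nonneg _) (norm_nonneg _)) (norm_nonneg _)
  · filter_upwards [ae_restrict_mem hΩ.measurableSet, grad_zero_ae hN hΩ hv,
      grad_zero_ae hN hΩ hw] with x hx h1 h2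
    exact ((Tr_grad_tendsto hΩ hv hx h1).inner (Tr_grad_tendsto hΩ hw hx h2)).sub
      (((Tr_tendsto v x).mul (Tr_tendsto w x)).const_mul c)

theorem InX.energy {w : EuclideanSpace ℝ (Fin N) → ℝ} (hw : InX Ω w) :
    (∫⁻ x in Ω, ENNReal.ofReal (‖fderiv ℝ w x‖ ^ 2)) =
      ENNReal.ofReal (∫ x in Ω, (inner ℝ (gradient w x) (gradient w x) : ℝ)) := by
  rw [ofReal_integral_eq_lintegral_ofReal (int_inner hw.mem hw.mem)
    (Eventually.of_forall fun x => real_inner_self_nonneg)]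
  simp [← grad_norm]

theorem InX.mass (hb : IsBounded Ω) {w : EuclideanSpace ℝ (Fin N) → ℝ} (hw : InX Ω w) :
    (∫⁻ x in Ω, ENNReal.ofReal ((w x) ^ 2)) =
      ENNReal.ofReal (∫ x in Ω, w x * w x) := by
  rw [ofReal_integral_eq_lintegral_ofReal (hw.int_mul hb hw)
    (Eventually.of_forall fun x => mul_self_nonneg _)]
  simp [← sq]

theorem Qf_split (hb : IsBounded Ω) {w : EuclideanSpace ℝ (Fin N) → ℝ} (c : ℝ) (hw : InX Ω w) :
    Qf Ω c w w = (∫ x in Ω, (inner ℝ (gradient w x) (gradient w x) : ℝ)) -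
      c * ∫ x in Ω, w x * w x := by
  unfold Qf
  rw [integral_sub (int_inner hw.mem hw.mem) ((hw.int_mul hb hw).const_mul c), integral_const_mul]

theorem rayleigh_lt (hb : IsBounded Ω) {w : EuclideanSpace ℝ (Fin N) → ℝ} {c : ℝ} (hw : InX Ω w)
    (h : Qf Ω c w w < 0) : dRayleigh Ω w < ENNReal.ofReal c := by
  rw [Qf_split hb c hw] at h
  unfold dRayleigh
  rw [hw.energy, hw.mass hb]
  have hE : 0 ≤ ∫ x in Ω, (inner ℝ (gradient w x) (gradient w x) : ℝ) :=
    integral_nonneg fun x => real_inner_self_nonneg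
  have hG : 0 ≤ ∫ x in Ω, w x * w x := integral_nonneg fun x => mul_self_nonneg _
  set E := ∫ x in Ω, (inner ℝ (gradient w x) (gradient w x) : ℝ)
  set G := ∫ x in Ω, w x * w x
  have hG' : 0 < G := by
    rcases hG.eq_or_lt with h0 | h0
    · rw [← h0] at h; linarith
    · exact h0
  have hc : 0 < c := by
    by_contra hc
    push Not at hc
    nlinarith
  rw [← ENNReal.ofReal_div_of_pos hG', ENNReal.ofReal_lt_ofReal_iff hc, div_lt_iff₀ hG']
  linarith

theorem Qf_zero_left (c : ℝ) : Qf Ω c (fun _ => 0) (fun _ => 0) = 0 := by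
  have : ∀ x : EuclideanSpace ℝ (Fin N), gradient (fun _ : EuclideanSpace ℝ (Fin N) => (0:ℝ)) x = 0 := by
    intro x; simp [gradient]
  simp [Qf, this]

/-- Two dimensional test spaces. -/
theorem dirEV_two_le (hN : 0 < N) (hΩ : IsOpen Ω) (hb : IsBounded Ω)
    {v w : EuclideanSpace ℝ (Fin N) → ℝ} {c : ℝ} (hv : InX Ω v) (hw : InX Ω w)
    (h1 : Qf Ω c v v < 0) (h2 : 0 < Qf Ω c v v * Qf Ω c w w - Qf Ω c v w ^ 2) :
    dirEV Ω 2 ≤ ENNReal.ofReal c := by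
  have e1 := (Qf_tendsto hN hΩ hb c hv hv).eventually_lt_const h1
  have e2 := (((Qf_tendsto hN hΩ hb c hv hv).mul (Qf_tendsto hN hΩ hb c hw hw)).sub
    ((Qf_tendsto hN hΩ hb c hv hw).pow 2)).eventually_const_lt h2
  obtain ⟨n, h1n, h2n⟩ := (e1.and e2).exists
  have hvn := Tr_inX hΩ hv n
  have hwn := Tr_inX hΩ hw n
  have cv : ContDiff ℝ 1 (Tr n v) := trunc_contDiff hΩ hv (eps_pos n)
  have cw : ContDiff ℝ 1 (Tr n w) := trunc_contDiff hΩ hw (eps_pos n)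
  have sv : tsupport (Tr n v) ⊆ Ω := trunc_tsupport hv (eps_pos n)
  have sw : tsupport (Tr n w) ⊆ Ω := trunc_tsupport hw (eps_pos n)
  set V := Tr n v
  set W := Tr n w
  have neg : ∀ a b : ℝ, (a ≠ 0 ∨ b ≠ 0) →
      Qf Ω c (fun y => a * V y + b * W y) (fun y => a * V y + b * W y) < 0 := by
    intro a b hab
    rw [Qf_lin hΩ hb c a b hvn hwn]
    set A := Qf Ω c V V
    set B := Qf Ω c V W
    set C := Qf Ω c W W
    have hA : A * (a ^ 2 * A + 2 * a * b * B + b ^ 2 * C) = (a * A + b * B) ^ 2 + b ^ 2 * (A * C - B ^ 2) := by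
      ring
    by_contra hcon
    push Not at hcon
    have hle : A * (a ^ 2 * A + 2 * a * b * B + b ^ 2 * C) ≤ 0 :=
      mul_nonpos_of_nonpos_of_nonneg h1n.le hcon
    rw [hA] at hle
    have hb0 : b = 0 := by
      by_contra hb0
      have : 0 < b ^ 2 * (A * C - B ^ 2) := by positivity
      nlinarith [sq_nonneg (a * A + b * B)]
    subst hb0
    have ha0 : a ≠ 0 := by simpa using hab
    have : 0 < (a * A) ^ 2 := by
      have := h1n.ne
      positivity
    nlinarith
  have eqf : ∀ a b : ℝ, a • V + b • W = fun y => a * V y + b * W y := fun a b => by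
    ext y; simp
  have li : LinearIndependent ℝ ![V, W] := by
    rw [LinearIndependent.pair_iff]
    intro a b hab
    by_contra hcon
    have hor : a ≠ 0 ∨ b ≠ 0 := by
      by_contra h'; push Not at h'; exact hcon h'
    have := neg a b hor
    rw [← eqf, hab] at this
    have h0 := Qf_zero_left (Ω := Ω) c
    change Qf Ω c (fun _ => 0) (fun _ => 0) < 0 at this
    linarith
  have hfr := finrank_span_eq_card li
  rw [Matrix.range_cons_cons_empty] at hfr
  refine (iInf₂_le (Submodule.span ℝ ({V, W} : Set _)) ⟨by simpa using hfr, ?_⟩).trans ?_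
  swap
  · intro u hu
    obtain ⟨a, b, rfl⟩ := Submodule.mem_span_pair.1 hu
    have hcd : ContDiff ℝ 1 (a • V + b • W) := (contDiff_const.smul cv).add (contDiff_const.smul cw)
    refine ⟨hcd, ?_⟩
    refine (tsupport_add _ _).trans (union_subset ?_ ?_)
    · exact (tsupport_smul_subset_right (fun _ => a) V).trans sv
    · exact (tsupport_smul_subset_right (fun _ => b) W).trans sw
  · refine iSup₂_le fun u hu => ?_
    obtain ⟨a, b, rfl⟩ := Submodule.mem_span_pair.1 hu.1
    have hor : a ≠ 0 ∨ b ≠ 0 := by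
      by_contra h'; push Not at h'; exact hu.2 (by simp [h'.1, h'.2])
    have := neg a b hor
    rw [eqf]
    exact (rayleigh_lt hb (hvn.lin hΩ a b hwn) this).le

/-- One dimensional test spaces. -/
theorem dirEV_one_lt (hN : 0 < N) (hΩ : IsOpen Ω) (hb : IsBounded Ω)
    {v : EuclideanSpace ℝ (Fin N) → ℝ} {c : ℝ} (hv : InX Ω v)
    (h1 : Qf Ω c v v < 0) : dirEV Ω 1 < ENNReal.ofReal c := by
  have e1 := (Qf_tendsto hN hΩ hb c hv hv).eventually_lt_const h1
  obtain ⟨n, h1n⟩ := e1.exists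
  have hvn := Tr_inX hΩ hv n
  have cv : ContDiff ℝ 1 (Tr n v) := trunc_contDiff hΩ hv (eps_pos n)
  have sv : tsupport (Tr n v) ⊆ Ω := trunc_tsupport hv (eps_pos n)
  set V := Tr n v
  have hV0 : V ≠ 0 := by
    intro h0
    rw [h0] at h1n
    have h0 := Qf_zero_left (Ω := Ω) c
    change Qf Ω c (fun _ => 0) (fun _ => 0) < 0 at h1n
    linarith
  refine lt_of_le_of_lt ((iInf₂_le (Submodule.span ℝ ({V} : Set _))
    ⟨finrank_span_singleton hV0, ?_⟩).trans (?_ : _ ≤ dRayleigh Ω V)) (rayleigh_lt hb hvn h1n)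
  swap
  · intro u hu
    obtain ⟨a, rfl⟩ := Submodule.mem_span_singleton.1 hu
    exact ⟨contDiff_const.smul cv, (tsupport_smul_subset_right (fun _ => a) V).trans sv⟩
  · refine iSup₂_le fun u hu => ?_
    obtain ⟨a, rfl⟩ := Submodule.mem_span_singleton.1 hu.1
    have ha : a ≠ 0 := by
      rintro rfl; exact hu.2 (by simp)
    have hf : ∀ x, ENNReal.ofReal (‖fderiv ℝ (a • V) x‖ ^ 2) =
        ENNReal.ofReal (a ^ 2) * ENNReal.ofReal (‖fderiv ℝ V x‖ ^ 2) := fun x => by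
      rw [fderiv_const_smul (cv.differentiable (by simp) x), norm_smul, mul_pow, Real.norm_eq_abs, sq_abs,
        ENNReal.ofReal_mul (sq_nonneg a)]
    have hf2 : ∀ x, ENNReal.ofReal ((a • V) x ^ 2) =
        ENNReal.ofReal (a ^ 2) * ENNReal.ofReal (V x ^ 2) := fun x => by
      rw [Pi.smul_apply, smul_eq_mul, mul_pow, ENNReal.ofReal_mul (sq_nonneg a)]
    unfold dRayleigh
    simp only [hf, hf2]
    rw [lintegral_const_mul' _ _ ENNReal.ofReal_ne_top, lintegral_const_mul' _ _ ENNReal.ofReal_ne_top,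
      ENNReal.mul_div_mul_left _ _ (by simpa using ha) ENNReal.ofReal_ne_top]

theorem weak_eq (hN : 0 < N) (hΩ : IsOpen Ω) (hb : IsBounded Ω)
    {u : EuclideanSpace ℝ (Fin N) → ℝ} {l : ℝ} (hu : InX Ω u)
    (hl : dirEV Ω 1 = ENNReal.ofReal l) (h0 : Qf Ω l u u = 0) :
    ∀ φ, InX Ω φ → Qf Ω l u φ = 0 := by
  intro φ hφ
  have hpos : ∀ w, InX Ω w → 0 ≤ Qf Ω l w w := by
    intro w hw
    by_contra hneg
    push Not at hneg
    have := dirEV_one_lt hN hΩ hb hw hneg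
    rw [hl] at this
    exact lt_irrefl _ this
  set B := Qf Ω l u φ with hB
  set C := Qf Ω l φ φ with hC
  have hC0 : 0 ≤ C := hpos φ hφ
  have h := hpos _ (hu.lin hΩ 1 (-B / (C + 1)) hφ)
  rw [Qf_lin hΩ hb l 1 _ hu hφ, h0, ← hB, ← hC] at h
  have e : 1 ^ 2 * 0 + 2 * 1 * (-B / (C + 1)) * B + (-B / (C + 1)) ^ 2 * C =
      -(B ^ 2 * ((C + 2) / (C + 1) ^ 2)) := by
    field_simp; ring
  rw [e] at h
  by_contra hB0
  have : 0 < B ^ 2 * ((C + 2) / (C + 1) ^ 2) := by positivity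
  linarith

theorem Qf_ground (hΩ : IsOpen Ω) (hb : IsBounded Ω)
    {u v : EuclideanSpace ℝ (Fin N) → ℝ} {l M : ℝ} (hu : InX Ω u)
    (hw : ∀ φ, InX Ω φ → Qf Ω l u φ = 0)
    (hv : ContDiffOn ℝ 1 v Ω) (hM : ∀ x ∈ Ω, |v x| ≤ M)
    (hg : MemLp (fun x => u x • gradient v x) 2 (volume.restrict Ω)) :
    InX Ω (fun y => v y * u y) ∧
    Qf Ω l (fun y => v y * u y) (fun y => v y * u y) = ∫ x in Ω, ‖u x • gradient v x‖ ^ 2 := by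
  have hvu : InX Ω (fun y => v y * u y) := InX.mul hΩ hv hM hu hg
  refine ⟨hvu, ?_⟩
  have hg2 : MemLp (fun x => (v x * u x) • gradient v x) 2 (volume.restrict Ω) := by
    refine hg.of_le_mul (c := M) (((cd_meas hΩ hv).mul hu.cont.aestronglyMeasurable).smul
      (cd_grad_meas hΩ hv)) ?_
    filter_upwards [ae_restrict_mem hΩ.measurableSet] with x hx
    rw [mul_smul, norm_smul]
    exact mul_le_mul_of_nonneg_right (hM x hx) (norm_nonneg _)
  have hvvu : InX Ω (fun y => v y * (v y * u y)) := InX.mul hΩ hv hM hvu hg2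
  have h0 := hw _ hvvu
  have hi : Integrable (fun x => ‖u x • gradient v x‖ ^ 2) (volume.restrict Ω) :=
    (memLp_two_iff_integrable_sq_norm hg.1).1 hg
  rw [← zero_add (∫ x in Ω, ‖u x • gradient v x‖ ^ 2), ← h0]
  unfold Qf
  rw [← integral_add (hu.int_Q hb l hvvu) hi]
  refine setIntegral_congr_fun hΩ.measurableSet fun x hx => ?_
  simp only
  have dv := cd_diff hΩ hv hx
  have du := cd_diff hΩ hu.cd hx
  have dvu : DifferentiableAt ℝ (fun y => v y * u y) x := dv.mul du
  rw [grad_mul dv dvu, grad_mul dv du, ← real_inner_self_eq_norm_sq]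
  simp only [inner_add_left, inner_add_right, inner_smul_left, inner_smul_right, conj_trivial]
  rw [real_inner_comm (gradient v x) (gradient u x)]
  ring

theorem dirEV_two_bdd (hN : 0 < N) (hΩ : IsOpen Ω) (hb : IsBounded Ω)
    {u v : EuclideanSpace ℝ (Fin N) → ℝ} {l M c : ℝ} (hu : InX Ω u)
    (hw : ∀ φ, InX Ω φ → Qf Ω l u φ = 0) (h1 : ∫ x in Ω, u x * u x = 1)
    (hv : ContDiffOn ℝ 1 v Ω) (hM : ∀ x ∈ Ω, |v x| ≤ M)
    (hg : MemLp (fun x => u x • gradient v x) 2 (volume.restrict Ω)) (hc : l < c)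
    (hD : ∫ x in Ω, ‖u x • gradient v x‖ ^ 2 <
      (c - l) * ((∫ x in Ω, (v x * u x) * (v x * u x)) - (∫ x in Ω, u x * (v x * u x)) ^ 2)) :
    dirEV Ω 2 ≤ ENNReal.ofReal c := by
  obtain ⟨hvu, hQ⟩ := Qf_ground hΩ hb hu hw hv hM hg
  have q1 := Qf_shift hb c l hu hu
  have q2 := Qf_shift hb c l hu hvu
  have q3 := Qf_shift hb c l hvu hvu
  rw [hw _ hu, h1] at q1
  rw [hw _ hvu] at q2
  rw [hQ] at q3
  refine dirEV_two_le hN hΩ hb hu hvu (c := c) (by rw [q1]; linarith) ?_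
  rw [q1, q2, q3]
  set D := ∫ x in Ω, ‖u x • gradient v x‖ ^ 2
  set S := ∫ x in Ω, (v x * u x) * (v x * u x)
  set m := ∫ x in Ω, u x * (v x * u x)
  have : 0 < (c - l) * ((c - l) * (S - m ^ 2) - D) := mul_pos (by linarith) (by linarith)
  nlinarith

/-- The bounded truncation `(n+1) arctan (s/(n+1))`. -/
def tau (n : ℕ) (s : ℝ) : ℝ := ((n : ℝ) + 1) * Real.arctan (s / ((n : ℝ) + 1))

theorem tau_deriv (n : ℕ) (s : ℝ) :
    HasDerivAt (tau n) (1 / (1 + (s / ((n : ℝ) + 1)) ^ 2)) s := by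
  have hn : (n : ℝ) + 1 ≠ 0 := by positivity
  have h := ((hasDerivAt_id s).div_const ((n : ℝ) + 1)).arctan.const_mul ((n : ℝ) + 1)
  have e : ((n : ℝ) + 1) * (1 / (1 + (id s / ((n : ℝ) + 1)) ^ 2) * (1 / ((n : ℝ) + 1))) =
      1 / (1 + (s / ((n : ℝ) + 1)) ^ 2) := by
    rw [id]; field_simp
  rw [← e]
  exact h

theorem tau_contDiff (n : ℕ) : ContDiff ℝ 1 (tau n) := by
  unfold tau
  exact contDiff_const.mul (Real.contDiff_arctan.comp (contDiff_id.div_const _))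

theorem abs_arctan_le_abs (s : ℝ) : |Real.arctan s| ≤ |s| := by
  have h := Convex.norm_image_sub_le_of_norm_deriv_le (f := Real.arctan) (s := Set.univ) (C := 1)
    (fun x _ => Real.differentiableAt_arctan x) (fun x _ => by
      rw [Real.deriv_arctan, Real.norm_eq_abs, abs_of_pos (by positivity)]
      rw [div_le_one (by positivity)]; nlinarith [sq_nonneg x]) convex_univ
      (Set.mem_univ 0) (Set.mem_univ s)
  simpa using h

theorem tau_le (n : ℕ) (s : ℝ) : |tau n s| ≤ |s| := by
  have hn : (0:ℝ) < (n : ℝ) + 1 := by positivity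
  unfold tau
  rw [abs_mul, abs_of_pos hn]
  have := abs_arctan_le_abs (s / ((n : ℝ) + 1))
  rw [abs_div, abs_of_pos hn, le_div_iff₀ hn] at this
  linarith

theorem tau_bdd (n : ℕ) (s : ℝ) : |tau n s| ≤ ((n : ℝ) + 1) * (Real.pi / 2) := by
  have hn : (0:ℝ) < (n : ℝ) + 1 := by positivity
  unfold tau
  rw [abs_mul, abs_of_pos hn]
  exact mul_le_mul_of_nonneg_left
    (abs_le.2 ⟨(Real.neg_pi_div_two_lt_arctan _).le, (Real.arctan_lt_pi_div_two _).le⟩) hn.le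

theorem tau_tendsto (s : ℝ) : Tendsto (fun n => tau n s) atTop (𝓝 s) := by
  have h : HasDerivAt (fun t : ℝ => Real.arctan (s * t)) s 0 := by
    have := ((hasDerivAt_id (0:ℝ)).const_mul s).arctan
    simpa using this
  have h2 := h.tendsto_slope_zero_right
  have h3 : Tendsto (fun n : ℕ => 1 / ((n : ℝ) + 1)) atTop (𝓝[>] 0) :=
    tendsto_nhdsWithin_iff.2 ⟨tendsto_one_div_add_atTop_nhds_zero_nat,
      Eventually.of_forall fun n => eps_pos n⟩
  refine (h2.comp h3).congr fun n => ?_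
  simp [tau, div_eq_mul_inv]

theorem tau_grad (hΩ : IsOpen Ω) {v : EuclideanSpace ℝ (Fin N) → ℝ} (hv : ContDiffOn ℝ 1 v Ω)
    (n : ℕ) {x : EuclideanSpace ℝ (Fin N)} (hx : x ∈ Ω) :
    ‖gradient (fun y => tau n (v y)) x‖ ≤ ‖gradient v x‖ := by
  rw [grad_comp (tau_deriv n (v x)) (cd_diff hΩ hv hx), norm_smul, Real.norm_eq_abs,
    abs_of_pos (by positivity)]
  refine mul_le_of_le_one_left (norm_nonneg _) ?_
  rw [div_le_one (by positivity)]
  nlinarith [sq_nonneg (v x / ((n : ℝ) + 1))]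

theorem lower_real (hN : 0 < N) (hΩ : IsOpen Ω) (hb : IsBounded Ω)
    {u v : EuclideanSpace ℝ (Fin N) → ℝ} {l c : ℝ} (hu : InX Ω u)
    (hw : ∀ φ, InX Ω φ → Qf Ω l u φ = 0) (h1 : ∫ x in Ω, u x * u x = 1)
    (hv : ContDiffOn ℝ 1 v Ω)
    (hg : MemLp (fun x => u x • gradient v x) 2 (volume.restrict Ω))
    (hvu : MemLp (fun x => v x * u x) 2 (volume.restrict Ω))
    (hm : ∫ x in Ω, u x * (v x * u x) = 0) (hc : l < c)
    (hD : ∫ x in Ω, ‖u x • gradient v x‖ ^ 2 < (c - l) * ∫ x in Ω, (v x * u x) * (v x * u x)) :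
    dirEV Ω 2 ≤ ENNReal.ofReal c := by
  have cdn : ∀ n, ContDiffOn ℝ 1 (fun y => tau n (v y)) Ω := fun n =>
    (tau_contDiff n).comp_contDiffOn hv
  have mn : ∀ n, AEStronglyMeasurable (fun y => tau n (v y) * u y) (volume.restrict Ω) := fun n =>
    (cd_meas hΩ (cdn n)).mul hu.cont.aestronglyMeasurable
  have hle : ∀ n x, ‖tau n (v x) * u x‖ ≤ ‖v x * u x‖ := fun n x => by
    rw [norm_mul, norm_mul]
    exact mul_le_mul_of_nonneg_right (tau_le n _) (norm_nonneg _)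
  have tS : Tendsto (fun n => ∫ x in Ω, (tau n (v x) * u x) * (tau n (v x) * u x)) atTop
      (𝓝 (∫ x in Ω, (v x * u x) * (v x * u x))) := by
    refine tendsto_integral_of_dominated_convergence (fun x => ‖v x * u x‖ * ‖v x * u x‖)
      (fun n => (mn n).mul (mn n)) (hvu.norm.integrable_mul hvu.norm) (fun n => ?_) ?_
    · refine Eventually.of_forall fun x => ?_
      rw [norm_mul]
      exact mul_le_mul (hle n x) (hle n x) (norm_nonneg _) (norm_nonneg _)
    · refine Eventually.of_forall fun x => ?_
      have := (tau_tendsto (v x)).mul_const (u x)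
      exact this.mul this
  have tm : Tendsto (fun n => ∫ x in Ω, u x * (tau n (v x) * u x)) atTop
      (𝓝 (∫ x in Ω, u x * (v x * u x))) := by
    refine tendsto_integral_of_dominated_convergence (fun x => ‖u x‖ * ‖v x * u x‖)
      (fun n => hu.cont.aestronglyMeasurable.mul (mn n))
      ((hu.memLp hb).norm.integrable_mul hvu.norm) (fun n => ?_) ?_
    · refine Eventually.of_forall fun x => ?_
      rw [norm_mul]
      exact mul_le_mul_of_nonneg_left (hle n x) (norm_nonneg _)
    · refine Eventually.of_forall fun x => ?_
      exact ((tau_tendsto (v x)).mul_const (u x)).const_mul (u x)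
  rw [hm] at tm
  have tt := (tS.sub (tm.pow 2)).const_mul (c - l)
  simp only [ne_eq, OfNat.ofNat_ne_zero, not_false_eq_true, zero_pow, sub_zero] at tt
  obtain ⟨n, hn⟩ := (tt.eventually_const_lt hD).exists
  have hgle : ∀ᵐ x ∂(volume.restrict Ω),
      ‖u x • gradient (fun y => tau n (v y)) x‖ ≤ ‖u x • gradient v x‖ := by
    filter_upwards [ae_restrict_mem hΩ.measurableSet] with x hx
    rw [norm_smul, norm_smul]
    exact mul_le_mul_of_nonneg_left (tau_grad hΩ hv n hx) (norm_nonneg _)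
  have hgn : MemLp (fun x => u x • gradient (fun y => tau n (v y)) x) 2 (volume.restrict Ω) :=
    hg.of_le (hu.cont.aestronglyMeasurable.smul (cd_grad_meas hΩ (cdn n))) hgle
  refine dirEV_two_bdd hN hΩ hb hu hw h1 (cdn n) (fun x _ => tau_bdd n (v x)) hgn hc
    (lt_of_le_of_lt ?_ hn)
  refine integral_mono_ae ((memLp_two_iff_integrable_sq_norm hgn.1).1 hgn)
    ((memLp_two_iff_integrable_sq_norm hg.1).1 hg) ?_
  filter_upwards [hgle] with x hx
  exact pow_le_pow_left₀ (norm_nonneg _) hx 2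

theorem lower (hN : 0 < N) (hΩ : IsOpen Ω) (hb : IsBounded Ω)
    {u v : EuclideanSpace ℝ (Fin N) → ℝ} {l : ℝ} (hl0 : 0 ≤ l) (hu : InX Ω u)
    (hw : ∀ φ, InX Ω φ → Qf Ω l u φ = 0) (h1 : ∫ x in Ω, u x * u x = 1)
    (hv : wAdm Ω (fun x => u x ^ 2) v) :
    dirEV Ω 2 ≤ wRayleigh Ω (fun x => u x ^ 2) v + ENNReal.ofReal l := by
  obtain ⟨cd, n0, nt, hm⟩ := hv
  have eS : ∀ x, v x ^ 2 * u x ^ 2 = ‖v x * u x‖ ^ 2 := fun x => by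
    rw [Real.norm_eq_abs, sq_abs]; ring
  have eD : ∀ x, ‖fderiv ℝ v x‖ ^ 2 * u x ^ 2 = ‖u x • gradient v x‖ ^ 2 := fun x => by
    rw [norm_smul, grad_norm, Real.norm_eq_abs, mul_pow, sq_abs]; ring
  simp only [eS] at n0 nt
  unfold wRayleigh
  simp only [eS, eD]
  have mvu : AEStronglyMeasurable (fun x => v x * u x) (volume.restrict Ω) :=
    (cd_meas hΩ cd).mul hu.cont.aestronglyMeasurable
  have mg : AEStronglyMeasurable (fun x => u x • gradient v x) (volume.restrict Ω) :=
    hu.cont.aestronglyMeasurable.smul (cd_grad_meas hΩ cd)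
  have hiS : Integrable (fun x => ‖v x * u x‖ ^ 2) (volume.restrict Ω) :=
    ⟨mvu.norm.pow 2, by
      rw [hasFiniteIntegral_iff_ofReal (Eventually.of_forall fun x => by positivity)]
      exact nt.lt_top⟩
  by_cases hD : (∫⁻ x in Ω, ENNReal.ofReal (‖u x • gradient v x‖ ^ 2)) = ∞
  · rw [hD, ENNReal.top_div_of_ne_top nt]; simp
  have hiD : Integrable (fun x => ‖u x • gradient v x‖ ^ 2) (volume.restrict Ω) :=
    ⟨mg.norm.pow 2, by
      rw [hasFiniteIntegral_iff_ofReal (Eventually.of_forall fun x => by positivity)]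
      exact lt_top_iff_ne_top.2 hD⟩
  have hvu := (memLp_two_iff_integrable_sq_norm mvu).2 hiS
  have hg := (memLp_two_iff_integrable_sq_norm mg).2 hiD
  rw [← ofReal_integral_eq_lintegral_ofReal hiS (Eventually.of_forall fun x => by positivity)] at n0 ⊢
  rw [← ofReal_integral_eq_lintegral_ofReal hiD (Eventually.of_forall fun x => by positivity)]
  have eS2 : ∫ x in Ω, ‖v x * u x‖ ^ 2 = ∫ x in Ω, (v x * u x) * (v x * u x) := by
    congr 1; ext x; rw [Real.norm_eq_abs, sq_abs, sq]
  rw [eS2] at n0 ⊢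
  have hS : 0 < ∫ x in Ω, (v x * u x) * (v x * u x) := by
    simpa using n0
  have hD0 : 0 ≤ ∫ x in Ω, ‖u x • gradient v x‖ ^ 2 := integral_nonneg fun x => by positivity
  have hm' : ∫ x in Ω, u x * (v x * u x) = 0 := by
    rw [← hm]; congr 1; ext x; ring
  rw [← ENNReal.ofReal_div_of_pos hS, ← ENNReal.ofReal_add (by positivity) hl0]
  have key : ∀ c, l < c → ∫ x in Ω, ‖u x • gradient v x‖ ^ 2 <
      (c - l) * ∫ x in Ω, (v x * u x) * (v x * u x) → dirEV Ω 2 ≤ ENNReal.ofReal c :=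
    fun c hc hcD => lower_real hN hΩ hb hu hw h1 cd hg hvu hm' hc hcD
  set D := ∫ x in Ω, ‖u x • gradient v x‖ ^ 2
  set S := ∫ x in Ω, (v x * u x) * (v x * u x)
  have ht := (tendsto_one_div_add_atTop_nhds_zero_nat (𝕜 := ℝ)).const_add (D / S + l)
  rw [add_zero] at ht
  refine ge_of_tendsto (ENNReal.tendsto_ofReal ht) (Eventually.of_forall fun n => ?_)
  have hp := eps_pos n
  have hDS : 0 ≤ D / S := by positivity
  refine key _ (by linarith) ?_
  have : (D / S + l + 1 / ((n : ℝ) + 1) - l) * S = D + 1 / ((n : ℝ) + 1) * S := by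
    field_simp; ring
  rw [this]
  have : 0 < 1 / ((n : ℝ) + 1) * S := by positivity
  linarith

theorem upper (hN : 0 < N) (hΩ : IsOpen Ω) (hb : IsBounded Ω)
    {u w : EuclideanSpace ℝ (Fin N) → ℝ} {l : ℝ} (hu : InX Ω u) (hw : InX Ω w)
    (hpos : ∀ x ∈ Ω, 0 < u x)
    (hl : ∀ φ, InX Ω φ → Qf Ω l u φ = 0) :
    (∫⁻ x in Ω, ENNReal.ofReal (‖fderiv ℝ (fun y => w y / u y) x‖ ^ 2 * u x ^ 2)) ≤
      ENNReal.ofReal (Qf Ω l w w) := by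
  have formula : ∀ z : EuclideanSpace ℝ (Fin N) → ℝ, ContDiffOn ℝ 1 z Ω → ∀ x ∈ Ω,
      u x • gradient (fun y => z y / u y) x = gradient z x - (z x / u x) • gradient u x := by
    intro z hz x hx
    have dz := cd_diff hΩ hz hx
    have du := cd_diff hΩ hu.cd hx
    have hux := (hpos x hx).ne'
    have dq : DifferentiableAt ℝ (fun y => z y / u y) x :=
      cd_diff hΩ (hz.div hu.cd fun y hy => (hpos y hy).ne') hx
    have h := grad_mul dq du
    have he : gradient (fun y => z y / u y * u y) x = gradient z x := by
      unfold gradient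
      congr 1
      apply Filter.EventuallyEq.fderiv_eq
      filter_upwards [hΩ.mem_nhds hx] with y hy
      exact div_mul_cancel₀ _ (hpos y hy).ne'
    rw [he] at h
    rw [h]; abel
  have cdq : ∀ n, ContDiffOn ℝ 1 (fun y => Tr n w y / u y) Ω := fun n =>
    (Tr_inX hΩ hw n).cd.div hu.cd fun x hx => (hpos x hx).ne'
  have hval : ∀ n, (∫⁻ x in Ω, ENNReal.ofReal (‖u x • gradient (fun y => Tr n w y / u y) x‖ ^ 2)) =
      ENNReal.ofReal (Qf Ω l (Tr n w) (Tr n w)) := by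
    intro n
    have hT := Tr_inX hΩ hw n
    have hts : tsupport (fun y => Tr n w y / u y) ⊆ tsupport (Tr n w) := by
      apply closure_mono
      intro y hy hy0
      exact hy (by simp [hy0])
    have hsT : tsupport (Tr n w) ⊆ Ω := trunc_tsupport hw (eps_pos n)
    have hcq : ContDiff ℝ 1 (fun y => Tr n w y / u y) :=
      contDiff_of_tsupport hΩ (cdq n) (hts.trans hsT)
    have hcs : HasCompactSupport (fun y => Tr n w y / u y) :=
      (hT.compact hb).of_isClosed_subset (isClosed_tsupport _) hts
    obtain ⟨M, hM⟩ := hcs.exists_bound_of_continuous hcq.continuous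
    have hgc : Continuous (gradient (fun y => Tr n w y / u y)) :=
      (LinearIsometryEquiv.continuous _).comp (hcq.continuous_fderiv (by simp))
    have hgu : MemLp (fun x => u x • gradient (fun y => Tr n w y / u y) x) 2 (volume.restrict Ω) := by
      apply (hu.cont.smul hgc).memLp_of_hasCompactSupport
      exact HasCompactSupport.smul_right (hu.compact hb)
    obtain ⟨-, hQ⟩ := Qf_ground hΩ hb hu hl (cdq n) (fun x _ => hM x) hgu
    have heq : (fun y => Tr n w y / u y * u y) = Tr n w := by
      ext y
      by_cases hy : y ∈ Ω
      · exact div_mul_cancel₀ _ (hpos y hy).ne'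
      · rw [hu.zero y hy, hT.zero y hy]; simp
    rw [heq] at hQ
    rw [hQ, ofReal_integral_eq_lintegral_ofReal ((memLp_two_iff_integrable_sq_norm hgu.1).1 hgu)
      (Eventually.of_forall fun x => by positivity)]
  have hlim : Tendsto (fun n => ENNReal.ofReal (Qf Ω l (Tr n w) (Tr n w))) atTop
      (𝓝 (ENNReal.ofReal (Qf Ω l w w))) :=
    ENNReal.tendsto_ofReal (Qf_tendsto hN hΩ hb l hw hw)
  have fatou := lintegral_liminf_le' (μ := volume.restrict Ω) (u := (atTop : Filter ℕ))
    (f := fun n x => ENNReal.ofReal (‖u x • gradient (fun y => Tr n w y / u y) x‖ ^ 2))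
    (fun n => ((hu.cont.aestronglyMeasurable.smul
      (cd_grad_meas hΩ (cdq n))).norm.pow 2).aemeasurable.ennreal_ofReal)
  simp only [hval] at fatou
  rw [hlim.liminf_eq] at fatou
  refine le_trans (le_of_eq ?_) fatou
  refine lintegral_congr_ae ?_
  filter_upwards [ae_restrict_mem hΩ.measurableSet, grad_zero_ae hN hΩ hw] with x hx h0
  symm
  apply Tendsto.liminf_eq
  have e : ‖fderiv ℝ (fun y => w y / u y) x‖ ^ 2 * u x ^ 2 =
      ‖u x • gradient (fun y => w y / u y) x‖ ^ 2 := by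
    rw [norm_smul, grad_norm, Real.norm_eq_abs, mul_pow, sq_abs]; ring
  rw [e, formula w hw.cd x hx]
  simp only [fun n => formula (Tr n w) (Tr_inX hΩ hw n).cd x hx]
  apply ENNReal.tendsto_ofReal
  exact ((Tr_grad_tendsto hΩ hw hx h0).sub
    (((Tr_tendsto w x).div_const (u x)).smul_const (gradient u x))).norm.pow 2

end Helpers

/-- Proposition 7.1 / `p:yau`: for an open bounded convex domain
`Ω ⊂ ℝ^N` with first two Dirichlet eigenvalues `λ₁(Ω), λ₂(Ω)` and `L²`-normalized
eigenfunctions `u₁, u₂`, the weighted Neumann eigenvalue satisfies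
`μ₁(Ω, u₁²) = λ₂(Ω) - λ₁(Ω)` (stated as `μ₁(Ω,u₁²) + λ₁(Ω) = λ₂(Ω)`), and an
eigenfunction for `μ₁(Ω, u₁²)` is `ū := u₂/u₁`. -/
theorem weighted_neumann_eq_gap :
    ∀ (N : ℕ), 0 < N →
      ∀ Ω : Set (EuclideanSpace ℝ (Fin N)),
        IsOpen Ω → IsBounded Ω → Convex ℝ Ω → Ω.Nonempty →
        ∀ u1 u2 : EuclideanSpace ℝ (Fin N) → ℝ,
          IsFirstDirichletEF Ω u1 → IsSecondDirichletEF Ω u1 u2 →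
          wEV Ω (fun x => (u1 x) ^ 2) + dirEV Ω 1 = dirEV Ω 2 ∧
          wAdm Ω (fun x => (u1 x) ^ 2) (fun x => u2 x / u1 x) ∧
          wRayleigh Ω (fun x => (u1 x) ^ 2) (fun x => u2 x / u1 x) =
            wEV Ω (fun x => (u1 x) ^ 2) := by
  intro N hN Ω hΩ hb _ _ u1 u2 h1 h2
  obtain ⟨c1, z1, d1, e1, pos, n1, r1⟩ := h1
  obtain ⟨c2, z2, d2, e2, orth, n2, r2⟩ := h2
  have X1 : InX Ω u1 := InX.of_lintegral hΩ c1 z1 d1 e1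
  have X2 : InX Ω u2 := InX.of_lintegral hΩ c2 z2 d2 e2
  unfold dRayleigh at r1 r2
  rw [n1, div_one, X1.energy] at r1
  rw [n2, div_one, X2.energy] at r2
  rw [X1.mass hb] at n1
  have n2' := n2
  rw [X2.mass hb] at n2'
  have m1 : ∫ x in Ω, u1 x * u1 x = 1 := by simpa using n1
  have m2 : ∫ x in Ω, u2 x * u2 x = 1 := by simpa using n2'
  set l1 := ∫ x in Ω, (inner ℝ (gradient u1 x) (gradient u1 x) : ℝ) with hl1
  set l2 := ∫ x in Ω, (inner ℝ (gradient u2 x) (gradient u2 x) : ℝ) with hl2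
  have l1nn : 0 ≤ l1 := integral_nonneg fun x => real_inner_self_nonneg
  have Q1 : Qf Ω l1 u1 u1 = 0 := by
    rw [Qf_split hb l1 X1, m1, ← hl1]; ring
  have Q2 : Qf Ω l1 u2 u2 = l2 - l1 := by
    rw [Qf_split hb l1 X2, m2, ← hl2]; ring
  have weak := weak_eq hN hΩ hb X1 r1.symm Q1
  have up := upper hN hΩ hb X1 X2 pos weak
  rw [Q2] at up
  have hmass : (∫⁻ x in Ω, ENNReal.ofReal ((u2 x / u1 x) ^ 2 * u1 x ^ 2)) = 1 := by
    rw [← n2]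
    refine setLIntegral_congr_fun hΩ.measurableSet fun x hx => ?_
    rw [← mul_pow, div_mul_cancel₀ _ (pos x hx).ne']
  have adm : wAdm Ω (fun x => (u1 x) ^ 2) (fun x => u2 x / u1 x) := by
    refine ⟨d2.div d1 fun x hx => (pos x hx).ne', by rw [hmass]; simp, by rw [hmass]; simp, ?_⟩
    rw [← orth]
    refine setIntegral_congr_fun hΩ.measurableSet fun x hx => ?_
    have := (pos x hx).ne'
    simp only
    field_simp
  have hR : wRayleigh Ω (fun x => (u1 x) ^ 2) (fun x => u2 x / u1 x) ≤
      ENNReal.ofReal (l2 - l1) := by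
    unfold wRayleigh
    rw [hmass, div_one]
    exact up
  have low : ∀ v, wAdm Ω (fun x => (u1 x) ^ 2) v →
      ENNReal.ofReal (l2 - l1) ≤ wRayleigh Ω (fun x => (u1 x) ^ 2) v := by
    intro v hv
    have h := lower hN hΩ hb l1nn X1 weak m1 hv
    rw [← r2] at h
    rw [ENNReal.ofReal_sub _ l1nn]
    exact tsub_le_iff_right.2 h
  have hEVlow : ENNReal.ofReal (l2 - l1) ≤ wEV Ω (fun x => (u1 x) ^ 2) :=
    le_iInf₂ fun v hv => low v hv
  have hEVup : wEV Ω (fun x => (u1 x) ^ 2) ≤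
      wRayleigh Ω (fun x => (u1 x) ^ 2) (fun x => u2 x / u1 x) := iInf₂_le _ adm
  have hEV : wEV Ω (fun x => (u1 x) ^ 2) = ENNReal.ofReal (l2 - l1) :=
    le_antisymm (hEVup.trans hR) hEVlow
  have hle : l1 ≤ l2 := by
    by_contra hlt
    push Not at hlt
    have := dirEV_one_lt hN hΩ hb X2 (c := l1) (by rw [Q2]; linarith)
    rw [← r1] at this
    exact lt_irrefl _ this
  refine ⟨?_, adm, le_antisymm (hR.trans hEVlow) hEVup⟩
  rw [hEV, ← r1, ← r2, ← ENNReal.ofReal_add (by linarith) l1nn]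
  congr 1; ring
end
end
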